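/- arXiv:2503.05410 — 4 statements merged into one kernel-verified Lean document; each statement's English description precedes it below -/
import Mathlib

section
/- Let n ≥ 1, N ≥ 1, m ∈ ℝ, and let α¹, …, αⁿ, β be Hermitian N × N complex matrices satisfying αʲαᵏ + αᵏαʲ = 2δ_{jk}·Id, αʲβ + βαʲ = 0, and β² = Id. Let V : ℝⁿ × ℂᴺ → ℝ be real-valued, and let ψ be a global classical solution of i∂_tψ = −i Σ_{j=1}^n αʲ∂_jψ + (m + V(x,ψ))βψ on ℝ × ℝⁿ with values in ℂᴺ. Then for every j ∈ {1,…,n} and every b > 0, lim_{t→+∞} ∫_{{x ∈ ℝⁿ : |x_j| ≥ (1+b)t}} ψ(t,x)†ψ(t,x) dx = 0. -/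
open MeasureTheory Filter Matrix

section aux
variable {n : ℕ}

lemma aux_fderiv_zero {K : Set (Fin n → ℝ)} (hK : IsCompact K) {G : ℝ × (Fin n → ℝ) → ℝ}
    (h0 : ∀ t x, x ∉ K → G (t, x) = 0) (t : ℝ) (x : Fin n → ℝ) (hx : x ∉ K) :
    fderiv ℝ G (t, x) = 0 := by
  have : G =ᶠ[nhds (t, x)] fun _ => 0 := by
    have ho : IsOpen {p : ℝ × (Fin n → ℝ) | p.2 ∉ K} :=
      hK.isClosed.isOpen_compl.preimage continuous_snd
    filter_upwards [ho.mem_nhds hx] with p hp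
    exact h0 p.1 p.2 hp
  rw [this.fderiv_eq]
  simp

lemma aux_integrable {K : Set (Fin n → ℝ)} (hK : IsCompact K) {g : (Fin n → ℝ) → ℝ}
    (hg : Continuous g) (h0 : ∀ x, x ∉ K → g x = 0) : Integrable g :=
  hg.integrable_of_hasCompactSupport (HasCompactSupport.intro hK h0)

lemma aux_hasDerivAt_t {G : ℝ × (Fin n → ℝ) → ℝ} (hG : Differentiable ℝ G) (t : ℝ)
    (x : Fin n → ℝ) : HasDerivAt (fun s => G (s, x)) (fderiv ℝ G (t, x) (1, 0)) t := by
  have h1 : HasDerivAt (fun s : ℝ => (s, x)) ((1 : ℝ), (0 : Fin n → ℝ)) t :=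
    (hasDerivAt_id t).prodMk (hasDerivAt_const t x)
  exact (hG (t, x)).hasFDerivAt.comp_hasDerivAt t h1

lemma aux_hasFDerivAt_x {G : ℝ × (Fin n → ℝ) → ℝ} (hG : Differentiable ℝ G) (t : ℝ)
    (x : Fin n → ℝ) : HasFDerivAt (fun y => G (t, y))
      ((fderiv ℝ G (t, x)).comp (ContinuousLinearMap.inr ℝ ℝ (Fin n → ℝ))) x := by
  have h1 : HasFDerivAt (fun y : Fin n → ℝ => (t, y))
      (ContinuousLinearMap.inr ℝ ℝ (Fin n → ℝ)) x := hasFDerivAt_prodMk_right t x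
  exact (hG (t, x)).hasFDerivAt.comp x h1

lemma aux_cont {G : ℝ × (Fin n → ℝ) → ℝ} (hG : ContDiff ℝ 1 G) (v : ℝ × (Fin n → ℝ)) :
    Continuous fun p => fderiv ℝ G p v :=
  (hG.continuous_fderiv one_ne_zero).clm_apply continuous_const

lemma aux_deriv_integral {K : Set (Fin n → ℝ)} (hK : IsCompact K) {G : ℝ × (Fin n → ℝ) → ℝ}
    (hG : ContDiff ℝ 1 G) (h0 : ∀ t x, x ∉ K → G (t, x) = 0) (t : ℝ) :
    HasDerivAt (fun s => ∫ x, G (s, x)) (∫ x, fderiv ℝ G (t, x) (1, 0)) t := by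
  obtain ⟨M, hM⟩ := ((isCompact_Icc (a := t - 1) (b := t + 1)).prod hK).exists_bound_of_continuousOn
    (aux_cont hG (1, 0)).continuousOn
  refine (hasDerivAt_integral_of_dominated_loc_of_deriv_le (F := fun s x => G (s, x))
    (F' := fun s x => fderiv ℝ G (s, x) (1, 0)) (s := Set.Icc (t - 1) (t + 1))
    (bound := K.indicator fun _ => M) (Icc_mem_nhds (by linarith) (by linarith)) ?_ ?_ ?_ ?_ ?_ ?_).2
  · refine Eventually.of_forall fun s => ?_
    exact (hG.continuous.comp (by fun_prop : Continuous fun x => (s, x))).aestronglyMeasurable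
  · exact aux_integrable hK (hG.continuous.comp (by fun_prop : Continuous fun x => (t, x))) (h0 t)
  · exact ((aux_cont hG (1, 0)).comp
      (by fun_prop : Continuous fun x => (t, x))).aestronglyMeasurable
  · refine Eventually.of_forall fun x s hs => ?_
    by_cases hx : x ∈ K
    · simpa [hx] using hM (s, x) ⟨hs, hx⟩
    · simp [hx, aux_fderiv_zero hK h0 s x hx]
  · rw [integrable_indicator_iff hK.measurableSet]
    exact integrableOn_const hK.measure_lt_top.ne
  · exact Eventually.of_forall fun x s _ =>
      aux_hasDerivAt_t (hG.differentiable one_ne_zero) s x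

lemma aux_integral_div {K : Set (Fin n → ℝ)} (hK : IsCompact K) {G : ℝ × (Fin n → ℝ) → ℝ}
    (hG : ContDiff ℝ 1 G) (h0 : ∀ t x, x ∉ K → G (t, x) = 0) (t : ℝ) (v : Fin n → ℝ) :
    ∫ x, fderiv ℝ G (t, x) (0, v) = 0 := by
  have hd := hG.differentiable one_ne_zero
  have e : ∀ x, fderiv ℝ (fun y => G (t, y)) x v = fderiv ℝ G (t, x) (0, v) := fun x => by
    rw [(aux_hasFDerivAt_x hd t x).fderiv]; simp
  have hi : Integrable fun x => fderiv ℝ G (t, x) (0, v) :=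
    aux_integrable hK ((aux_cont hG _).comp (by fun_prop : Continuous fun x => (t, x)))
      fun x hx => by simp [aux_fderiv_zero hK h0 t x hx]
  have := integral_mul_fderiv_eq_neg_fderiv_mul_of_integrable (μ := volume)
    (f := fun _ : Fin n → ℝ => (1 : ℝ)) (g := fun y => G (t, y)) (v := v)
    (by simp) (by simpa [e] using hi)
    (by
      simp only [one_mul]
      exact aux_integrable hK (hG.continuous.comp (by fun_prop : Continuous fun x => (t, x))) (h0 t))
    (fun x _ => by fun_prop) (fun x _ => (aux_hasFDerivAt_x hd t x).differentiableAt)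
  simpa [e] using this

/-- weighted energy inequality -/
lemma aux_weight {K : Set (Fin n → ℝ)} (hK : IsCompact K)
    {ρ : ℝ × (Fin n → ℝ) → ℝ} {J : Fin n → ℝ × (Fin n → ℝ) → ℝ} {W : ℝ × (Fin n → ℝ) → ℝ}
    (hρ : ContDiff ℝ 1 ρ) (hJ : ∀ k, ContDiff ℝ 1 (J k)) (hW : ContDiff ℝ 1 W)
    (hW0 : ∀ t x, x ∉ K → W (t, x) = 0)
    (hcons : ∀ p, fderiv ℝ ρ p (1, 0) = - ∑ k, fderiv ℝ (J k) p (0, Pi.single k 1))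
    (hint : ∀ t, Integrable fun x => ρ (t, x)) {C : ℝ} (hC : ∀ t, ∫ x, ρ (t, x) ≤ C)
    {B : ℝ} (hB : 0 ≤ B)
    (hineq : ∀ p, fderiv ℝ W p (1, 0) * ρ p + ∑ k, fderiv ℝ W p (0, Pi.single k 1) * J k p
      ≤ B * ρ p) {T : ℝ} (hT : 0 ≤ T) :
    ∫ x, W (T, x) * ρ (T, x) ≤ (∫ x, W (0, x) * ρ (0, x)) + B * C * T := by
  have hWρ : ContDiff ℝ 1 fun p => W p * ρ p := hW.mul hρ
  have hWJ : ∀ k, ContDiff ℝ 1 fun p => W p * J k p := fun k => hW.mul (hJ k)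
  have hD := fun t => aux_deriv_integral hK hWρ (fun t x hx => by simp [hW0 t x hx]) t
  have hdW := hW.differentiable one_ne_zero
  have hdρ := hρ.differentiable one_ne_zero
  have hdJ := fun k => (hJ k).differentiable one_ne_zero
  have key : ∀ p, fderiv ℝ (fun p => W p * ρ p) p (1, 0)
      + ∑ k, fderiv ℝ (fun p => W p * J k p) p (0, Pi.single k 1) ≤ B * ρ p := by
    intro p
    refine le_trans (le_of_eq ?_) (hineq p)
    rw [fderiv_fun_mul (hdW p) (hdρ p)]
    have : ∀ k, fderiv ℝ (fun p => W p * J k p) p (0, Pi.single k 1)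
        = W p * fderiv ℝ (J k) p (0, Pi.single k 1)
          + fderiv ℝ W p (0, Pi.single k 1) * J k p := fun k => by
      rw [fderiv_fun_mul (hdW p) (hdJ k p)]
      simp [mul_comm]
    simp only [this, Finset.sum_add_distrib, ← Finset.mul_sum]
    simp [hcons]
    ring
  have hle : ∀ t, ∫ x, fderiv ℝ (fun p => W p * ρ p) (t, x) (1, 0) ≤ B * C := by
    intro t
    have hi1 : Integrable fun x => fderiv ℝ (fun p => W p * ρ p) (t, x) (1, 0) :=
      aux_integrable hK ((aux_cont hWρ _).comp (by fun_prop : Continuous fun x => (t, x)))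
        fun x hx => by
          rw [aux_fderiv_zero hK (fun t x hx => by simp [hW0 t x hx]) t x hx]; simp
    have hi2 : ∀ k, Integrable fun x =>
        fderiv ℝ (fun p => W p * J k p) (t, x) (0, Pi.single k 1) := fun k =>
      aux_integrable hK ((aux_cont (hWJ k) _).comp (by fun_prop : Continuous fun x => (t, x)))
        fun x hx => by
          rw [aux_fderiv_zero hK (fun t x hx => by simp [hW0 t x hx]) t x hx]; simp
    have hz : ∀ k, ∫ x, fderiv ℝ (fun p => W p * J k p) (t, x) (0, Pi.single k 1) = 0 :=
      fun k => aux_integral_div hK (hWJ k) (fun t x hx => by simp [hW0 t x hx]) t _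
    have hi3 := integrable_finsetSum Finset.univ fun k _ => hi2 k
    calc _ = ∫ x, (fderiv ℝ (fun p => W p * ρ p) (t, x) (1, 0)
          + ∑ k, fderiv ℝ (fun p => W p * J k p) (t, x) (0, Pi.single k 1)) := by
            rw [integral_add hi1 hi3, integral_finsetSum _ fun k _ => hi2 k]
            simp [hz]
      _ ≤ ∫ x, B * ρ (t, x) := integral_mono (hi1.add hi3) ((hint t).const_mul B)
            fun x => key (t, x)
      _ = B * ∫ x, ρ (t, x) := integral_const_mul _ _
      _ ≤ B * C := mul_le_mul_of_nonneg_left (hC t) hB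
  have := image_sub_le_mul_sub_of_deriv_le (f := fun s => ∫ x, W (s, x) * ρ (s, x))
    (fun t => (hD t).differentiableAt) (C := B * C) (fun t => by rw [(hD t).deriv]; exact hle t) hT
  simp only [sub_zero] at this
  linarith


lemma aux_cone {ρ : ℝ × (Fin n → ℝ) → ℝ} {J : Fin n → ℝ × (Fin n → ℝ) → ℝ}
    (hρ : ContDiff ℝ 1 ρ) (hJ : ∀ k, ContDiff ℝ 1 (J k))
    (hJρ : ∀ k p, |J k p| ≤ ρ p)
    (hcons : ∀ p, fderiv ℝ ρ p (1, 0) = - ∑ k, fderiv ℝ (J k) p (0, Pi.single k 1))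
    (hint : ∀ t, Integrable fun x => ρ (t, x)) {C : ℝ} (hC : ∀ t, ∫ x, ρ (t, x) ≤ C)
    (j : Fin n) {σ : ℝ} (hσ : |σ| = 1) (R : ℝ) {T : ℝ} (hT : 0 ≤ T) :
    ∫ x, Real.smoothTransition (σ * x j - T - R) * ρ (T, x)
      ≤ ∫ x, Real.smoothTransition (σ * x j - 0 - R) * ρ (0, x) := by
  let χ : ContDiffBump (0 : Fin n → ℝ) := ⟨1, 2, one_pos, one_lt_two⟩
  have hχd : ContDiff ℝ 1 χ := χ.contDiff
  have hsd : ContDiff ℝ 1 Real.smoothTransition := Real.smoothTransition.contDiff (n := 1)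
  obtain ⟨M, hM⟩ := (χ.hasCompactSupport.fderiv (𝕜 := ℝ)).exists_bound_of_continuous
    (hχd.continuous_fderiv one_ne_zero)
  have hM0 : 0 ≤ M := (norm_nonneg _).trans (hM 0)
  have hMk : ∀ y (k : Fin n), |fderiv ℝ χ y (Pi.single k 1)| ≤ M := by
    intro y k
    refine ((fderiv ℝ χ y).le_opNorm _).trans ?_
    have : ‖(Pi.single k 1 : Fin n → ℝ)‖ = 1 := by simp [Pi.norm_single]
    rw [this, mul_one]
    exact hM y
  have hρ0 : ∀ p, 0 ≤ ρ p := fun p => (abs_nonneg _).trans (hJρ j p)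
  let A : ℝ × (Fin n → ℝ) → ℝ := fun p => Real.smoothTransition (σ * p.2 j - p.1 - R)
  have hA0 : ∀ p, 0 ≤ A p := fun p => Real.smoothTransition.nonneg _
  have hA1 : ∀ p, A p ≤ 1 := fun p => Real.smoothTransition.le_one _
  have hAc : ContDiff ℝ 1 A := hsd.comp (by fun_prop)
  have hAd : ∀ p, HasFDerivAt A (deriv Real.smoothTransition (σ * p.2 j - p.1 - R) •
      (σ • ((ContinuousLinearMap.proj (R := ℝ) (φ := fun _ : Fin n => ℝ) j).comp
        (ContinuousLinearMap.snd ℝ ℝ (Fin n → ℝ))) - ContinuousLinearMap.fst ℝ ℝ (Fin n → ℝ))) p := by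
    intro p
    refine HasDerivAt.comp_hasFDerivAt p
      ((hsd.differentiable one_ne_zero _).hasDerivAt) ?_
    refine HasFDerivAt.sub_const _ (HasFDerivAt.sub ?_ hasFDerivAt_fst)
    exact ((ContinuousLinearMap.proj (R := ℝ) (φ := fun _ : Fin n => ℝ) j).comp
        (ContinuousLinearMap.snd ℝ ℝ (Fin n → ℝ))).hasFDerivAt.const_mul σ
  have hs' : ∀ y, 0 ≤ deriv Real.smoothTransition y := fun y =>
    Real.smoothTransition.monotone.deriv_nonneg
  have main : ∀ c : ℝ, 0 < c → ∫ x, (A (T, x) * χ (c • x)) * ρ (T, x)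
      ≤ (∫ x, (A (0, x) * χ (c • x)) * ρ (0, x)) + (c * (n * M)) * C * T := by
    intro c hc
    have hXd : ∀ p : ℝ × (Fin n → ℝ), HasFDerivAt (fun p : ℝ × (Fin n → ℝ) => χ (c • p.2))
        ((fderiv ℝ χ (c • p.2)).comp (c • ContinuousLinearMap.snd ℝ ℝ (Fin n → ℝ))) p := by
      intro p
      exact (hχd.differentiable one_ne_zero _).hasFDerivAt.comp p (hasFDerivAt_snd.const_smul c)
    refine aux_weight (W := fun p => A p * χ (c • p.2)) (K := Metric.closedBall 0 (2 / c))
      (isCompact_closedBall _ _) hρ hJ (hAc.mul (hχd.comp (by fun_prop))) ?_ hcons hint hC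
      (by positivity) ?_ hT
    · intro t x hx
      have : χ (c • x) = 0 := by
        apply χ.zero_of_le_dist
        simp only [Metric.mem_closedBall, dist_zero_right, not_le] at hx ⊢
        rw [norm_smul, Real.norm_of_nonneg hc.le]
        rw [div_lt_iff₀ hc] at hx
        show (2 : ℝ) ≤ _
        linarith
      simp [this]
    · intro p
      rw [((hAd p).fun_mul (hXd p)).fderiv]
      set s' := deriv Real.smoothTransition (σ * p.2 j - p.1 - R) with hs'def
      have hs0 : 0 ≤ s' := hs' _
      have hX0 : 0 ≤ χ (c • p.2) := χ.nonneg
      have h1 : ∀ k, (A p • (fderiv ℝ χ (c • p.2)).comp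
            (c • ContinuousLinearMap.snd ℝ ℝ (Fin n → ℝ)) + χ (c • p.2) • s' •
          (σ • ((ContinuousLinearMap.proj (R := ℝ) (φ := fun _ : Fin n => ℝ) j).comp
          (ContinuousLinearMap.snd ℝ ℝ (Fin n → ℝ))) - ContinuousLinearMap.fst ℝ ℝ (Fin n → ℝ)))
            (0, Pi.single k 1) * J k p
          = c * (A p * (fderiv ℝ χ (c • p.2) (Pi.single k 1) * J k p))
            + if k = j then χ (c • p.2) * s' * σ * J j p else 0 := by
        intro k
        by_cases hk : k = j
        · subst hk
          simp
          ring
        · simp [hk, Ne.symm hk, Pi.single_apply]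
          ring
      rw [Finset.sum_congr rfl fun k _ => h1 k, Finset.sum_add_distrib]
      have h2 : ∑ k, c * (A p * (fderiv ℝ χ (c • p.2) (Pi.single k 1) * J k p))
          ≤ ∑ k : Fin n, c * (M * ρ p) := by
        refine Finset.sum_le_sum fun k _ => mul_le_mul_of_nonneg_left ?_ hc.le
        have h3 : fderiv ℝ χ (c • p.2) (Pi.single k 1) * J k p ≤ M * ρ p := by
          refine (le_abs_self _).trans ?_
          rw [abs_mul]
          exact mul_le_mul (hMk _ k) (hJρ k p) (abs_nonneg _) hM0
        have h4 : 0 ≤ M * ρ p := mul_nonneg hM0 (hρ0 p)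
        nlinarith [hA0 p, hA1 p]
      have h5 : σ * J j p ≤ ρ p := by
        refine (le_abs_self _).trans ?_
        rw [abs_mul, hσ, one_mul]
        exact hJρ j p
      have h6 : 0 ≤ χ (c • p.2) * s' * (ρ p - σ * J j p) :=
        mul_nonneg (mul_nonneg hX0 hs0) (by linarith)
      simp at h2 ⊢
      nlinarith
  have lim : ∀ t, Tendsto (fun m : ℕ => ∫ x, (A (t, x) * χ ((1 / ((m : ℝ) + 1)) • x)) * ρ (t, x))
      atTop (nhds (∫ x, A (t, x) * ρ (t, x))) := by
    intro t
    have hAt : Continuous fun x => A (t, x) := hAc.continuous.comp (by fun_prop)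
    have hρt : Continuous fun x => ρ (t, x) := hρ.continuous.comp (by fun_prop)
    refine tendsto_integral_of_dominated_convergence (fun x => ρ (t, x)) ?_ (hint t) ?_ ?_
    · intro m
      have : Continuous fun x : Fin n → ℝ => χ ((1 / ((m : ℝ) + 1)) • x) :=
        hχd.continuous.comp (by fun_prop)
      exact ((hAt.mul this).mul hρt).aestronglyMeasurable
    · intro m
      refine Eventually.of_forall fun x => ?_
      have h1 := hA0 (t, x)
      have h2 := hA1 (t, x)
      have h3 : 0 ≤ χ ((1 / ((m : ℝ) + 1)) • x) := χ.nonneg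
      have h4 : χ ((1 / ((m : ℝ) + 1)) • x) ≤ 1 := χ.le_one
      rw [Real.norm_of_nonneg (mul_nonneg (mul_nonneg h1 h3) (hρ0 _))]
      exact mul_le_of_le_one_left (hρ0 _) (mul_le_one₀ h2 h3 h4)
    · refine Eventually.of_forall fun x => ?_
      have h1 : Tendsto (fun m : ℕ => χ ((1 / ((m : ℝ) + 1)) • x)) atTop (nhds (χ ((0 : ℝ) • x))) :=
        (hχd.continuous.tendsto _).comp (tendsto_one_div_add_atTop_nhds_zero_nat.smul_const x)
      have h2 : χ ((0 : ℝ) • x) = 1 := by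
        apply χ.one_of_mem_closedBall
        simp only [zero_smul]
        exact Metric.mem_closedBall_self zero_le_one
      rw [h2] at h1
      simpa using (h1.const_mul (A (t, x))).mul_const (ρ (t, x))
  have lim2 : Tendsto (fun m : ℕ => ((1 / ((m : ℝ) + 1)) * (n * M)) * C * T) atTop (nhds 0) := by
    simpa using ((tendsto_one_div_add_atTop_nhds_zero_nat.mul_const (n * M)).mul_const C).mul_const T
  have := le_of_tendsto_of_tendsto' (lim T) ((lim 0).add lim2)
    fun m => main (1 / ((m : ℝ) + 1)) (by positivity)
  simpa [A] using this

lemma aux_final {ρ : ℝ × (Fin n → ℝ) → ℝ} {J : Fin n → ℝ × (Fin n → ℝ) → ℝ}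
    (hρ : ContDiff ℝ 1 ρ) (hJ : ∀ k, ContDiff ℝ 1 (J k))
    (hJρ : ∀ k p, |J k p| ≤ ρ p)
    (hcons : ∀ p, fderiv ℝ ρ p (1, 0) = - ∑ k, fderiv ℝ (J k) p (0, Pi.single k 1))
    (hint : ∀ t, Integrable fun x => ρ (t, x)) {C : ℝ} (hC : ∀ t, ∫ x, ρ (t, x) ≤ C)
    (j : Fin n) {b : ℝ} (hb : 0 < b) :
    Tendsto (fun t : ℝ => ∫ x in {x : Fin n → ℝ | (1 + b) * t ≤ |x j|}, ρ (t, x))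
      atTop (nhds 0) := by
  have hρ0 : ∀ p, 0 ≤ ρ p := fun p => (abs_nonneg _).trans (hJρ j p)
  have hst : Continuous Real.smoothTransition := Real.smoothTransition.continuous
  have hsi : ∀ (σ t r : ℝ), Integrable fun x : Fin n → ℝ =>
      Real.smoothTransition (σ * x j - r) * ρ (t, x) := by
    intro σ t r
    refine (hint t).bdd_mul (c := 1) ?_ ?_
    · exact (hst.comp (by fun_prop)).aestronglyMeasurable
    · refine Eventually.of_forall fun x => ?_
      rw [Real.norm_of_nonneg (Real.smoothTransition.nonneg _)]
      exact Real.smoothTransition.le_one _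
  have lim : ∀ σ : ℝ, Tendsto (fun t : ℝ =>
      ∫ x, Real.smoothTransition (σ * x j - 0 - (b * t - 1)) * ρ (0, x)) atTop (nhds 0) := by
    intro σ
    suffices h : Tendsto (fun t : ℝ =>
        ∫ x, Real.smoothTransition (σ * x j - 0 - (b * t - 1)) * ρ (0, x)) atTop
        (nhds (∫ _ : Fin n → ℝ, (0 : ℝ))) by
      rwa [integral_zero] at h
    refine tendsto_integral_filter_of_dominated_convergence (fun x => ρ (0, x)) ?_ ?_ (hint 0) ?_
    · refine Eventually.of_forall fun t => ?_
      simpa [sub_sub] using (hsi σ 0 (0 + (b * t - 1))).aestronglyMeasurable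
    · refine Eventually.of_forall fun t => Eventually.of_forall fun x => ?_
      rw [Real.norm_of_nonneg (mul_nonneg (Real.smoothTransition.nonneg _) (hρ0 _))]
      exact mul_le_of_le_one_left (hρ0 _) (Real.smoothTransition.le_one _)
    · refine Eventually.of_forall fun x => ?_
      refine tendsto_const_nhds.congr' ?_
      filter_upwards [eventually_ge_atTop ((σ * x j + 1) / b)] with t ht
      rw [div_le_iff₀ hb] at ht
      rw [Real.smoothTransition.zero_of_nonpos (by simp; linarith)]
      simp
  have lim2 := (lim 1).add (lim (-1))
  rw [add_zero] at lim2
  refine tendsto_of_tendsto_of_tendsto_of_le_of_le' tendsto_const_nhds lim2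
    (Eventually.of_forall fun t => integral_nonneg fun x => hρ0 _) ?_
  filter_upwards [eventually_ge_atTop (0 : ℝ)] with t ht
  have hc := fun (σ : ℝ) (hσ : |σ| = 1) =>
    aux_cone hρ hJ hJρ hcons hint hC j hσ (b * t - 1) ht
  refine le_trans ?_ (add_le_add (hc 1 (by simp)) (hc (-1) (by simp)))
  have hI : ∀ σ : ℝ, Integrable fun x : Fin n → ℝ =>
      Real.smoothTransition (σ * x j - t - (b * t - 1)) * ρ (t, x) := fun σ => by
    simpa [sub_sub] using hsi σ t (t + (b * t - 1))
  rw [← integral_add (hI 1) (hI (-1))]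
  have hS : MeasurableSet {x : Fin n → ℝ | (1 + b) * t ≤ |x j|} :=
    measurableSet_le measurable_const (by fun_prop)
  rw [← integral_indicator hS]
  refine integral_mono ((hint t).indicator hS) ((hI 1).add (hI (-1))) fun x => ?_
  have e1 : 0 ≤ Real.smoothTransition (1 * x j - t - (b * t - 1)) * ρ (t, x) :=
    mul_nonneg (Real.smoothTransition.nonneg _) (hρ0 _)
  have e2 : 0 ≤ Real.smoothTransition (-1 * x j - t - (b * t - 1)) * ρ (t, x) :=
    mul_nonneg (Real.smoothTransition.nonneg _) (hρ0 _)
  by_cases hx : (1 + b) * t ≤ |x j|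
  · rw [Set.indicator_of_mem (by exact hx)]
    show _ ≤ _ + _
    rcases le_abs.1 hx with h | h
    · rw [Real.smoothTransition.one_of_one_le (x := 1 * x j - t - (b * t - 1)) (by linarith)]
      linarith
    · rw [Real.smoothTransition.one_of_one_le (x := -1 * x j - t - (b * t - 1)) (by linarith)]
      linarith
  · rw [Set.indicator_of_notMem (by exact hx)]
    exact add_nonneg e1 e2


lemma aux_quad {N : ℕ} {M : Matrix (Fin N) (Fin N) ℂ} (hM : M.IsHermitian) {φ : ℝ → Fin N → ℂ}
    {φ' : Fin N → ℂ} {t : ℝ} (h : HasDerivAt φ φ' t) :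
    HasDerivAt (fun s => (star (φ s) ⬝ᵥ M *ᵥ φ s).re) (2 * (star (φ t) ⬝ᵥ M *ᵥ φ').re) t := by
  have hk := hasDerivAt_pi.1 h
  have h1 : HasDerivAt (fun s => star (φ s) ⬝ᵥ M *ᵥ φ s)
      (star φ' ⬝ᵥ M *ᵥ φ t + star (φ t) ⬝ᵥ M *ᵥ φ') t := by
    have h2 : ∀ a, HasDerivAt (fun s => (M *ᵥ φ s) a) ((M *ᵥ φ') a) t := fun a => by
      simp only [mulVec, dotProduct]
      exact HasDerivAt.fun_sum fun b _ => (hk b).const_mul _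
    simp only [dotProduct, ← Finset.sum_add_distrib]
    exact HasDerivAt.fun_sum fun a _ => ((hk a).star).fun_mul (h2 a)
  have h3 : HasDerivAt (fun s => (star (φ s) ⬝ᵥ M *ᵥ φ s).re)
      (star φ' ⬝ᵥ M *ᵥ φ t + star (φ t) ⬝ᵥ M *ᵥ φ').re t :=
    Complex.reCLM.hasFDerivAt.comp_hasDerivAt t h1
  convert h3 using 1
  have h4 : star φ' ⬝ᵥ M *ᵥ φ t = star (star (φ t) ⬝ᵥ M *ᵥ φ') := by
    rw [← star_dotProduct, star_mulVec, hM.eq, ← dotProduct_mulVec]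
  rw [h4, Complex.add_re]
  simp
  ring

lemma aux_quad_contDiff {N : ℕ} (M : Matrix (Fin N) (Fin N) ℂ)
    {Φ : ℝ × (Fin n → ℝ) → Fin N → ℂ} (h : ContDiff ℝ 1 Φ) :
    ContDiff ℝ 1 fun p => (star (Φ p) ⬝ᵥ M *ᵥ Φ p).re := by
  have hk := contDiff_pi.1 h
  refine Complex.reCLM.contDiff.comp ?_
  simp only [dotProduct, mulVec]
  refine ContDiff.sum fun a _ => ContDiff.mul ?_ (ContDiff.sum fun b _ => contDiff_const.mul (hk b))
  exact Complex.conjCLE.contDiff.comp (hk a)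

lemma aux_quad_fderiv {N : ℕ} {M : Matrix (Fin N) (Fin N) ℂ} (hM : M.IsHermitian)
    {Φ : ℝ × (Fin n → ℝ) → Fin N → ℂ} (h : ContDiff ℝ 1 Φ) (p v : ℝ × (Fin n → ℝ)) :
    fderiv ℝ (fun p => (star (Φ p) ⬝ᵥ M *ᵥ Φ p).re) p v
      = 2 * (star (Φ p) ⬝ᵥ M *ᵥ (fderiv ℝ Φ p v)).re := by
  have hd : HasDerivAt (fun s : ℝ => p + s • v) v 0 := by
    simpa using ((hasDerivAt_id (0 : ℝ)).smul_const v).const_add p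
  have e : p + (0 : ℝ) • v = p := by simp
  have hQ := ((aux_quad_contDiff M h).differentiable one_ne_zero (p + (0 : ℝ) • v)).hasFDerivAt
  have hΦ := (h.differentiable one_ne_zero (p + (0 : ℝ) • v)).hasFDerivAt
  have h1 := hQ.comp_hasDerivAt (0 : ℝ) hd
  have h2 := aux_quad hM (hΦ.comp_hasDerivAt (0 : ℝ) hd)
  have := h1.unique h2
  simpa only [Function.comp, e] using this

lemma aux_quad_bound {N : ℕ} {M : Matrix (Fin N) (Fin N) ℂ} (hM : M.IsHermitian) (hM2 : M * M = 1)
    (u : Fin N → ℂ) : |(star u ⬝ᵥ M *ᵥ u).re| ≤ ∑ k, ‖u k‖ ^ 2 := by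
  have hsq : ∀ w : Fin N → ℂ, ((∑ k, ‖w k‖ ^ 2 : ℝ) : ℂ) = star w ⬝ᵥ w := fun w => by
    simp [dotProduct, Complex.conj_mul']
  have hw : ∑ k, ‖(M *ᵥ u) k‖ ^ 2 = ∑ k, ‖u k‖ ^ 2 := by
    have : ((∑ k, ‖(M *ᵥ u) k‖ ^ 2 : ℝ) : ℂ) = ((∑ k, ‖u k‖ ^ 2 : ℝ) : ℂ) := by
      rw [hsq, hsq, star_mulVec, hM.eq, ← dotProduct_mulVec, mulVec_mulVec, hM2, one_mulVec]
    exact_mod_cast this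
  calc |(star u ⬝ᵥ M *ᵥ u).re| ≤ ‖star u ⬝ᵥ M *ᵥ u‖ := Complex.abs_re_le_norm _
    _ ≤ ∑ k, ‖star u k * (M *ᵥ u) k‖ := norm_sum_le _ _
    _ ≤ ∑ k, (‖u k‖ ^ 2 + ‖(M *ᵥ u) k‖ ^ 2) / 2 := by
        refine Finset.sum_le_sum fun k _ => ?_
        rw [norm_mul, Pi.star_apply, norm_star]
        nlinarith [sq_nonneg (‖u k‖ - ‖(M *ᵥ u) k‖)]
    _ = ∑ k, ‖u k‖ ^ 2 := by
        rw [← Finset.sum_div, Finset.sum_add_distrib, hw]; ring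

end aux

/-- Theorem 1.7: exterior light-cone decay for the `n`-dimensional Dirac equation with a
real potential `V`. -/
theorem dirac_exterior_cone_decay
    (n N : ℕ) (hn : 1 ≤ n) (hN : 1 ≤ N) (m : ℝ)
    (α : Fin n → Matrix (Fin N) (Fin N) ℂ) (β : Matrix (Fin N) (Fin N) ℂ)
    (hαherm : ∀ j, (α j).IsHermitian) (hβherm : β.IsHermitian)
    (hanticomm : ∀ j k : Fin n,
      α j * α k + α k * α j = if j = k then (2 : ℂ) • (1 : Matrix (Fin N) (Fin N) ℂ) else 0)
    (hαβ : ∀ j, α j * β + β * α j = 0)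
    (hβ2 : β * β = 1)
    (V : (Fin n → ℝ) → (Fin N → ℂ) → ℝ)
    (ψ : ℝ → (Fin n → ℝ) → (Fin N → ℂ))
    -- global classical solution: smoothness, Schwartz decay, uniform L² bound
    (hψ : ContDiff ℝ (⊤ : ℕ∞) (fun p : ℝ × (Fin n → ℝ) => ψ p.1 p.2))
    (hψS : ∀ t : ℝ, ∃ f : SchwartzMap (Fin n → ℝ) (Fin N → ℂ), ∀ x, f x = ψ t x)
    (hbound : ∃ C : ℝ, ∀ t : ℝ,
      (∫ (x : Fin n → ℝ), ∑ k : Fin N, ‖ψ t x k‖ ^ 2) ≤ C)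
    -- the equation i∂_tψ = −i Σ_j αʲ∂_jψ + (m + V(x,ψ))βψ, componentwise
    (heq : ∀ (t : ℝ) (x : Fin n → ℝ) (k : Fin N),
      Complex.I * deriv (fun s => ψ s x k) t
        = -Complex.I *
            (∑ j : Fin n,
              ((α j) *ᵥ (fun l => fderiv ℝ (fun y => ψ t y l) x (Pi.single j 1))) k)
          + ((m + V x (ψ t x) : ℝ) : ℂ) * ((β *ᵥ ψ t x) k)) :
    ∀ (j : Fin n) (b : ℝ), 0 < b →
      Tendsto
        (fun t : ℝ =>
          ∫ x in {x : Fin n → ℝ | (1 + b) * t ≤ |x j|},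
            ∑ k : Fin N, ‖ψ t x k‖ ^ 2)
        atTop (nhds 0) := by
  obtain ⟨C, hC⟩ := hbound
  intro j b hb
  set Φ : ℝ × (Fin n → ℝ) → Fin N → ℂ := fun p => ψ p.1 p.2 with hΦdef
  have hΦ : ContDiff ℝ 1 Φ := hψ.of_le (by exact_mod_cast le_top)
  have hΦd := hΦ.differentiable one_ne_zero
  have hρe : ∀ p, ∑ k, ‖Φ p k‖ ^ 2
      = (star (Φ p) ⬝ᵥ (1 : Matrix (Fin N) (Fin N) ℂ) *ᵥ Φ p).re := fun p => by
    simp only [one_mulVec, dotProduct, Complex.re_sum]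
    refine Finset.sum_congr rfl fun k _ => ?_
    rw [Pi.star_apply, Complex.star_def, Complex.conj_mul', ← Complex.ofReal_pow,
      Complex.ofReal_re]
  have hρf : (fun p => ∑ k, ‖Φ p k‖ ^ 2)
      = fun p => (star (Φ p) ⬝ᵥ (1 : Matrix (Fin N) (Fin N) ℂ) *ᵥ Φ p).re := funext hρe
  have hα2 : ∀ k, α k * α k = 1 := fun k => by
    have h := hanticomm k k
    rw [if_pos rfl, ← two_smul ℂ (α k * α k)] at h
    exact smul_right_injective _ (two_ne_zero (α := ℂ)) h
  refine aux_final (ρ := fun p => ∑ k, ‖Φ p k‖ ^ 2)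
    (J := fun k p => (star (Φ p) ⬝ᵥ (α k) *ᵥ Φ p).re) (C := C) ?_ ?_ ?_ ?_ ?_ hC j hb
  · rw [hρf]
    exact aux_quad_contDiff 1 hΦ
  · exact fun k => aux_quad_contDiff (α k) hΦ
  · exact fun k p => aux_quad_bound (hαherm k) (hα2 k) (Φ p)
  · rintro ⟨t, x⟩
    rw [hρf, aux_quad_fderiv isHermitian_one hΦ]
    simp only [aux_quad_fderiv (hαherm _) hΦ]
    have ht : ∀ k, deriv (fun s => ψ s x k) t = fderiv ℝ Φ (t, x) (1, 0) k := fun k => by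
      have h1 : HasDerivAt (fun s : ℝ => (s, x)) ((1 : ℝ), (0 : Fin n → ℝ)) t :=
        (hasDerivAt_id t).prodMk (hasDerivAt_const t x)
      exact (hasDerivAt_pi.1 ((hΦd (t, x)).hasFDerivAt.comp_hasDerivAt t h1) k).deriv
    have hx : ∀ l (v : Fin n → ℝ), fderiv ℝ (fun y => ψ t y l) x v
        = fderiv ℝ Φ (t, x) (0, v) l := fun l v => by
      have h1 := (hΦd (t, x)).hasFDerivAt.comp x (hasFDerivAt_prodMk_right (𝕜 := ℝ) t x)
      have h2 := hasFDerivAt_pi'.1 h1 l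
      have h3 : HasFDerivAt (fun y => ψ t y l) _ x := h2
      rw [h3.fderiv]
      simp
    have hv : fderiv ℝ Φ (t, x) (1, 0)
        = -(∑ k, α k *ᵥ fderiv ℝ Φ (t, x) (0, Pi.single k 1))
          + (-Complex.I * ((m + V x (ψ t x) : ℝ) : ℂ)) • (β *ᵥ Φ (t, x)) := by
      funext k
      have h := heq t x k
      rw [ht] at h
      simp only [hx] at h
      have h' := congrArg (fun z => -Complex.I * z) h
      simp only [mul_add, ← mul_assoc, neg_mul, mul_neg, neg_neg, Complex.I_mul_I, one_mul] at h'
      simp only [Pi.add_apply, Pi.neg_apply, Finset.sum_apply, Pi.smul_apply, smul_eq_mul]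
      rw [h']
      ring
    have hβ0 : (star (Φ (t, x)) ⬝ᵥ β *ᵥ Φ (t, x)).im = 0 :=
      hβherm.im_star_dotProduct_mulVec_self (Φ (t, x))
    rw [one_mulVec, hv, dotProduct_add, dotProduct_neg, dotProduct_sum, dotProduct_smul,
      Complex.add_re, Complex.neg_re, Complex.re_sum, ← Finset.mul_sum]
    have hz : ((-Complex.I * ((m + V x (ψ t x) : ℝ) : ℂ)) •
        (star (Φ (t, x)) ⬝ᵥ β *ᵥ Φ (t, x))).re = 0 := by
      rw [smul_eq_mul, Complex.mul_re, hβ0]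
      simp
    rw [hz]
    ring
  · intro t
    obtain ⟨f, hf⟩ := hψS t
    have hi : Integrable fun x => ‖f x‖ ^ 2 := (f.memLp 2 volume).integrable_norm_pow two_ne_zero
    refine integrable_finsetSum _ fun k _ => ?_
    refine hi.mono' ?_ ?_
    · have : Continuous fun x => Φ (t, x) k :=
        (continuous_apply k).comp (hΦ.continuous.comp (by fun_prop))
      exact (this.norm.pow 2).aestronglyMeasurable
    · refine Eventually.of_forall fun x => ?_
      rw [hf, Real.norm_of_nonneg (by positivity)]
      exact pow_le_pow_left₀ (norm_nonneg _) (norm_le_pi_norm (ψ t x) k) 2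
end

section
/- Let m ∈ ℝ and let (u, v) be a global classical solution of the 1D Dirac system in laboratory coordinates, and assume the nonlinearity W is such that u·conj(∂_{ū}W(u,v)) − v·conj(∂_{v̄}W(u,v)) is real for all (u,v) ∈ ℂ². Let ϕ : ℝ → ℝ be smooth with ϕ, ϕ′ bounded, let λ : ℝ → (0,∞) be C¹, and set J(t) = ∫_ℝ ϕ(x/λ(t)) (|u(t,x)|² − |v(t,x)|²) dx. Then for all t: d/dt J(t) = −(λ′(t)/λ(t)) ∫_ℝ (x/λ(t)) ϕ′(x/λ(t)) (|u|² − |v|²) dx + (1/λ(t)) ∫_ℝ ϕ′(x/λ(t)) (|u|² + |v|²) dx + 4m Im ∫_ℝ ϕ(x/λ(t)) u(t,x) conj(v(t,x)) dx. -/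
open MeasureTheory Filter

/-- Evaluation of a polynomial in the four variables `(u, ū, v, v̄)`. -/
noncomputable def evalW (W : MvPolynomial (Fin 4) ℂ) (z w : ℂ) : ℂ :=
  MvPolynomial.eval ![z, (starRingEnd ℂ) z, w, (starRingEnd ℂ) w] W

/-- A semilinear system in characteristic form whose time slices decay. -/
structure CharSys (G1 G2 : ℂ × ℂ → ℂ) (U V : ℝ → ℝ → ℂ) : Prop where
  contU : Continuous fun p : ℝ × ℝ => U p.1 p.2
  contV : Continuous fun p : ℝ × ℝ => V p.1 p.2
  dU : ∀ y r : ℝ, HasDerivAt (fun r => U r (y + r)) (G1 (U r (y + r), V r (y + r))) r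
  dV : ∀ y r : ℝ, HasDerivAt (fun r => V r (y - r)) (G2 (U r (y - r), V r (y - r))) r
  decU : ∀ r : ℝ, ∃ C : ℝ, ∀ x : ℝ, ‖U r x‖ ≤ C / (1 + x ^ 2)
  decV : ∀ r : ℝ, ∃ C : ℝ, ∀ x : ℝ, ‖V r x‖ ≤ C / (1 + x ^ 2)

lemma CharSys.reflect {G1 G2 : ℂ × ℂ → ℂ} {U V : ℝ → ℝ → ℂ} (h : CharSys G1 G2 U V) :
    CharSys (fun p => G2 (p.2, p.1)) (fun p => G1 (p.2, p.1))
      (fun r x => V r (-x)) (fun r x => U r (-x)) where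
  contU := h.contV.comp (by fun_prop : Continuous fun p : ℝ × ℝ => (p.1, -p.2))
  contV := h.contU.comp (by fun_prop : Continuous fun p : ℝ × ℝ => (p.1, -p.2))
  dU := by
    intro y r
    have := h.dV (-y) r
    have e : ∀ r : ℝ, -(y + r) = -y - r := fun r => by ring
    simpa only [e] using this
  dV := by
    intro y r
    have := h.dU (-y) r
    have e : ∀ r : ℝ, -(y - r) = -y + r := fun r => by ring
    simpa only [e] using this
  decU := by
    intro r
    obtain ⟨C, hC⟩ := h.decV r
    exact ⟨C, fun x => by simpa using hC (-x)⟩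
  decV := by
    intro r
    obtain ⟨C, hC⟩ := h.decU r
    exact ⟨C, fun x => by simpa using hC (-x)⟩

lemma char_step {f g : ℝ → ℂ} {s κ ε : ℝ} (hs : 0 ≤ s)
    (hf : ∀ r, HasDerivAt f (g r) r) (h0 : ‖f 0‖ ≤ ε)
    (hb : ∀ r, 0 ≤ r → r < s → ‖g r‖ ≤ κ) : ‖f s‖ ≤ ε + κ * s := by
  have h := norm_image_sub_le_of_norm_deriv_le_segment' (a := 0) (b := s) (C := κ)
    (fun x _ => (hf x).hasDerivWithinAt) (fun x hx => hb x hx.1 hx.2) s ⟨hs, le_rfl⟩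
  have h2 : ‖f s‖ ≤ ‖f s - f 0‖ + ‖f 0‖ := by
    simpa using norm_add_le (f s - f 0) (f 0)
  rw [sub_zero] at h
  linarith

/-- Bootstrap on a triangle of dependence. -/
lemma CharSys.triangle {G1 G2 : ℂ × ℂ → ℂ} {U V : ℝ → ℝ → ℂ} (h : CharSys G1 G2 U V)
    {x δ ε κ : ℝ} (hκ : 0 ≤ κ) (hκδ : κ * δ < ε)
    (hG1 : ∀ a b : ℂ, ‖a‖ ≤ 2 * ε → ‖b‖ ≤ 2 * ε → ‖G1 (a, b)‖ ≤ κ)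
    (hG2 : ∀ a b : ℂ, ‖a‖ ≤ 2 * ε → ‖b‖ ≤ 2 * ε → ‖G2 (a, b)‖ ≤ κ)
    (hU : ∀ y, |y - x| ≤ δ → ‖U 0 y‖ ≤ ε) (hV : ∀ y, |y - x| ≤ δ → ‖V 0 y‖ ≤ ε) :
    ∀ s y, 0 ≤ s → |y - x| ≤ δ - s → ‖U s y‖ < 2 * ε ∧ ‖V s y‖ < 2 * ε := by
  by_contra hcon
  push Not at hcon
  obtain ⟨s₁, y₁, hs₁, hy₁, hbad⟩ := hcon
  let S : Set (ℝ × ℝ) := {p | (0 ≤ p.1 ∧ |p.2 - x| ≤ δ - p.1) ∧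
    2 * ε ≤ max ‖U p.1 p.2‖ ‖V p.1 p.2‖}
  have hcU := h.contU
  have hcV := h.contV
  have hSc : IsClosed S := by
    have c1 : IsClosed {p : ℝ × ℝ | 0 ≤ p.1} := isClosed_le (by fun_prop) (by fun_prop)
    have c2 : IsClosed {p : ℝ × ℝ | |p.2 - x| ≤ δ - p.1} :=
      isClosed_le (by fun_prop) (by fun_prop)
    have c3 : IsClosed {p : ℝ × ℝ | 2 * ε ≤ max ‖U p.1 p.2‖ ‖V p.1 p.2‖} :=
      isClosed_le (by fun_prop) (by fun_prop)
    exact (c1.inter c2).inter c3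
  have hSK : S ⊆ Set.Icc 0 δ ×ˢ Set.Icc (x - δ) (x + δ) := by
    rintro ⟨s, y⟩ ⟨⟨h1, h2⟩, -⟩
    simp only at h1 h2
    have h3 := abs_nonneg (y - x)
    rw [abs_le] at h2
    simp only [Set.mem_prod, Set.mem_Icc]
    exact ⟨⟨h1, by linarith⟩, by linarith [h2.1], by linarith [h2.2]⟩
  have hScomp : IsCompact S :=
    (isCompact_Icc.prod isCompact_Icc).of_isClosed_subset hSc hSK
  have hSne : S.Nonempty := by
    refine ⟨(s₁, y₁), ⟨hs₁, hy₁⟩, ?_⟩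
    by_cases hc : ‖U s₁ y₁‖ < 2 * ε
    · exact le_max_of_le_right (hbad hc)
    · exact le_max_of_le_left (not_lt.1 hc)
  obtain ⟨⟨s, y⟩, ⟨⟨hs0, hsy⟩, hmax⟩, hmin⟩ := hScomp.exists_isMinOn hSne continuous_fst.continuousOn
  simp only at hs0 hsy hmax
  have hgood : ∀ r z, 0 ≤ r → r < s → |z - x| ≤ δ - r → ‖U r z‖ ≤ 2 * ε ∧ ‖V r z‖ ≤ 2 * ε := by
    intro r z hr hrs hz
    by_contra hc
    have : (r, z) ∈ S := by
      refine ⟨⟨hr, hz⟩, ?_⟩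
      by_contra hlt
      rw [not_le, max_lt_iff] at hlt
      exact hc ⟨hlt.1.le, hlt.2.le⟩
    have h3 := hmin this
    simp only [Set.mem_ofPred_eq] at h3
    linarith
  rw [abs_le] at hsy
  have hsδ : s ≤ δ := by linarith [hsy.1, hsy.2]
  have hks : κ * s ≤ κ * δ := by gcongr
  have h1 : ‖U s y‖ ≤ ε + κ * s := by
    have := char_step (f := fun r => U r (y - s + r)) (ε := ε) (κ := κ) hs0 (h.dU (y - s))
      (hU _ (by rw [abs_le]; constructor <;> linarith [hsy.1, hsy.2])) (by
        intro r hr hrs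
        obtain ⟨a, b⟩ := hgood r (y - s + r) hr hrs
          (by rw [abs_le]; constructor <;> linarith [hsy.1, hsy.2])
        exact hG1 _ _ a b)
    simpa using this
  have h2 : ‖V s y‖ ≤ ε + κ * s := by
    have := char_step (f := fun r => V r (y + s - r)) (ε := ε) (κ := κ) hs0 (h.dV (y + s))
      (hV _ (by rw [abs_le]; constructor <;> linarith [hsy.1, hsy.2])) (by
        intro r hr hrs
        obtain ⟨a, b⟩ := hgood r (y + s - r) hr hrs
          (by rw [abs_le]; constructor <;> linarith [hsy.1, hsy.2])
        exact hG2 _ _ a b)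
    simpa using this
  have : max ‖U s y‖ ‖V s y‖ < 2 * ε := max_lt (by linarith) (by linarith)
  linarith

lemma local_lip {G : ℂ × ℂ → ℂ} (hG : DifferentiableAt ℝ G 0) :
    ∃ L ρ : ℝ, 0 < L ∧ 0 < ρ ∧ ∀ a b : ℂ, ∀ ε ≤ ρ, ‖a‖ ≤ ε → ‖b‖ ≤ ε →
      ‖G (a, b) - G 0‖ ≤ L * ε := by
  obtain ⟨L, hL, hb⟩ := hG.hasFDerivAt.isBigO_sub.exists_pos
  rw [Asymptotics.isBigOWith_iff, Metric.eventually_nhds_iff] at hb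
  obtain ⟨ρ, hρ, hb⟩ := hb
  refine ⟨L, ρ / 2, hL, by positivity, fun a b ε hε ha hb' => ?_⟩
  have hn : ‖(a, b)‖ ≤ ε := by rw [Prod.norm_def]; exact max_le ha hb'
  have := @hb (a, b) (by rw [dist_zero_right]; linarith)
  rw [sub_zero] at this
  exact this.trans (by gcongr)

lemma dec_tail {f : ℝ → ℂ} (h : ∃ C : ℝ, ∀ x : ℝ, ‖f x‖ ≤ C / (1 + x ^ 2)) {ε : ℝ} (hε : 0 < ε) :
    ∃ R : ℝ, 0 ≤ R ∧ ∀ x, R ≤ |x| → ‖f x‖ ≤ ε := by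
  obtain ⟨C, hC⟩ := h
  have hC0 : 0 ≤ C := by simpa using (norm_nonneg _).trans (hC 0)
  refine ⟨C / ε + 1, by positivity, fun x hx => (hC x).trans ?_⟩
  rw [div_le_iff₀ (by positivity)]
  have h0 : 0 ≤ C / ε := by positivity
  have h1 : C / ε ≤ x ^ 2 := by
    rw [← sq_abs]; nlinarith
  rw [div_le_iff₀ hε] at h1
  nlinarith

lemma CharSys.zero1 {G1 G2 : ℂ × ℂ → ℂ} {U V : ℝ → ℝ → ℂ} (h : CharSys G1 G2 U V)
    (hG1 : DifferentiableAt ℝ G1 0) (hG2 : DifferentiableAt ℝ G2 0) : G1 0 = 0 := by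
  by_contra hc
  have hcpos : 0 < ‖G1 0‖ := norm_pos_iff.2 hc
  obtain ⟨L1, ρ1, hL1, hρ1, hb1⟩ := local_lip hG1
  obtain ⟨L2, ρ2, hL2, hρ2, hb2⟩ := local_lip hG2
  obtain ⟨ε, hε, hε1, hε2, hε3⟩ : ∃ ε : ℝ, 0 < ε ∧ 2 * ε ≤ ρ1 ∧ 2 * ε ≤ ρ2 ∧
      L1 * (2 * ε) ≤ ‖G1 0‖ / 2 := by
    refine ⟨min (min (ρ1 / 2) (ρ2 / 2)) (‖G1 0‖ / (4 * L1)), by positivity, ?_, ?_, ?_⟩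
    · have : min (min (ρ1 / 2) (ρ2 / 2)) (‖G1 0‖ / (4 * L1)) ≤ ρ1 / 2 :=
        (min_le_left _ _).trans (min_le_left _ _)
      linarith
    · have : min (min (ρ1 / 2) (ρ2 / 2)) (‖G1 0‖ / (4 * L1)) ≤ ρ2 / 2 :=
        (min_le_left _ _).trans (min_le_right _ _)
      linarith
    · have : min (min (ρ1 / 2) (ρ2 / 2)) (‖G1 0‖ / (4 * L1)) ≤ ‖G1 0‖ / (4 * L1) :=
        min_le_right _ _
      rw [le_div_iff₀ (by positivity)] at this
      linarith
  set κ : ℝ := ‖G1 0‖ + ‖G2 0‖ + L1 * (2 * ε) + L2 * (2 * ε) with hκ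
  have hκ0 : 0 ≤ κ := by positivity
  set δ : ℝ := ε / (κ + 1) with hδ
  have hδ0 : 0 < δ := by positivity
  have hκδ : κ * δ < ε := by
    have : (κ + 1) * δ = ε := by rw [hδ]; field_simp
    linarith
  obtain ⟨R1, hR10, hR1⟩ := dec_tail (h.decU 0) hε
  obtain ⟨R2, hR20, hR2⟩ := dec_tail (h.decV 0) hε
  have hη : 0 < ‖G1 0‖ * δ / 8 := by positivity
  obtain ⟨R3, hR30, hR3⟩ := dec_tail (h.decU 0) hη
  obtain ⟨R4, hR40, hR4⟩ := dec_tail (h.decU δ) hη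
  set x : ℝ := R1 + R2 + R3 + R4 + δ with hx
  have tri := h.triangle (x := x) hκ0 hκδ
    (fun a b ha hb => by
      have := hb1 a b _ hε1 ha hb
      have h2 : ‖G1 (a, b)‖ ≤ ‖G1 (a, b) - G1 0‖ + ‖G1 0‖ := by
        simpa using norm_add_le (G1 (a, b) - G1 0) (G1 0)
      have : 0 ≤ ‖G2 0‖ := norm_nonneg _
      have : 0 ≤ L2 * (2 * ε) := by positivity
      linarith)
    (fun a b ha hb => by
      have := hb2 a b _ hε2 ha hb
      have h2 : ‖G2 (a, b)‖ ≤ ‖G2 (a, b) - G2 0‖ + ‖G2 0‖ := by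
        simpa using norm_add_le (G2 (a, b) - G2 0) (G2 0)
      have : 0 ≤ L1 * (2 * ε) := by positivity
      linarith)
    (fun y hy => hR1 y (by rw [abs_le] at hy; exact le_trans (by linarith [hy.1]) (le_abs_self y)))
    (fun y hy => hR2 y (by rw [abs_le] at hy; exact le_trans (by linarith [hy.1]) (le_abs_self y)))
  have hd : ∀ r, HasDerivAt (fun r : ℝ => U r (x - δ + r) - (r : ℂ) * G1 0)
      (G1 (U r (x - δ + r), V r (x - δ + r)) - G1 0) r := by
    intro r
    have h1 := (h.dU (x - δ) r).sub ((Complex.ofRealCLM.hasDerivAt (x := r)).mul_const (G1 0))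
    rw [Complex.ofRealCLM_apply, Complex.ofReal_one, one_mul] at h1
    exact h1
  have hmv := char_step (s := δ) (κ := ‖G1 0‖ / 2) (ε := ‖G1 0‖ * δ / 8) hδ0.le hd (by
      simp only [add_zero, Complex.ofReal_zero, zero_mul, sub_zero]
      exact hR3 _ (le_trans (by linarith) (le_abs_self _)))
    (fun r hr hrd => by
      obtain ⟨a, b⟩ := tri r (x - δ + r) hr (by rw [abs_le]; constructor <;> linarith)
      exact (hb1 _ _ _ hε1 a.le b.le).trans hε3)
  simp only [sub_add_cancel] at hmv
  have h4 := hR4 x (le_trans (by linarith) (le_abs_self _))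
  have h5 : ‖(δ : ℂ) * G1 0‖ ≤ ‖U δ x‖ + ‖U δ x - (δ : ℂ) * G1 0‖ := by
    have := norm_sub_le (U δ x) (U δ x - (δ : ℂ) * G1 0)
    simpa using this
  rw [norm_mul, Complex.norm_real, Real.norm_of_nonneg hδ0.le] at h5
  nlinarith

lemma CharSys.zero2 {G1 G2 : ℂ × ℂ → ℂ} {U V : ℝ → ℝ → ℂ} (h : CharSys G1 G2 U V)
    (hG1 : DifferentiableAt ℝ G1 0) (hG2 : DifferentiableAt ℝ G2 0) : G2 0 = 0 := by
  have e : ∀ G : ℂ × ℂ → ℂ, DifferentiableAt ℝ G 0 →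
      DifferentiableAt ℝ (fun p : ℂ × ℂ => G (p.2, p.1)) 0 := by
    intro G hG
    have h2 : DifferentiableAt ℝ (fun p : ℂ × ℂ => (p.2, p.1)) 0 := by fun_prop
    exact DifferentiableAt.comp (0 : ℂ × ℂ) (g := G) (f := fun p : ℂ × ℂ => (p.2, p.1)) hG h2
  exact h.reflect.zero1 (e _ hG2) (e _ hG1)

/-- Uniform decay for short positive times. -/
lemma CharSys.decay {G1 G2 : ℂ × ℂ → ℂ} {U V : ℝ → ℝ → ℂ} (h : CharSys G1 G2 U V)
    (hG1 : DifferentiableAt ℝ G1 0) (hG2 : DifferentiableAt ℝ G2 0) :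
    ∃ δ C : ℝ, 0 < δ ∧ ∀ s x, 0 ≤ s → s ≤ δ →
      ‖U s x‖ ≤ C / (1 + x ^ 2) ∧ ‖V s x‖ ≤ C / (1 + x ^ 2) := by
  have z1 := h.zero1 hG1 hG2
  have z2 := h.zero2 hG1 hG2
  obtain ⟨L1, ρ1, hL1, hρ1, hb1⟩ := local_lip hG1
  obtain ⟨L2, ρ2, hL2, hρ2, hb2⟩ := local_lip hG2
  simp only [z1, z2, sub_zero] at hb1 hb2
  obtain ⟨CU, hCU⟩ := h.decU 0
  obtain ⟨CV, hCV⟩ := h.decV 0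
  have hCU0 : 0 ≤ CU := by simpa using (norm_nonneg _).trans (hCU 0)
  have hCV0 : 0 ≤ CV := by simpa using (norm_nonneg _).trans (hCV 0)
  set C0 : ℝ := CU + CV + 1 with hC0
  have hC0p : 0 < C0 := by positivity
  set L := L1 + L2 with hL
  have hLp : 0 < L := by positivity
  obtain ⟨δ, hδ, hδ1, hδL⟩ : ∃ δ : ℝ, 0 < δ ∧ δ ≤ 1 ∧ L * 2 * δ < 1 := by
    refine ⟨min 1 (1 / (4 * L)), by positivity, min_le_left _ _, ?_⟩
    have : min 1 (1 / (4 * L)) ≤ 1 / (4 * L) := min_le_right _ _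
    rw [le_div_iff₀ (by positivity)] at this
    linarith
  set R : ℝ := 6 * C0 / ρ1 + 6 * C0 / ρ2 + 1 with hR
  have hRp : 0 < R := by positivity
  have hcU := h.contU
  have hcV := h.contV
  obtain ⟨M, hM⟩ := (isCompact_Icc.prod isCompact_Icc :
      IsCompact (Set.Icc (0 : ℝ) δ ×ˢ Set.Icc (-R) R)).exists_bound_of_continuousOn
      (f := fun p : ℝ × ℝ => ‖U p.1 p.2‖ + ‖V p.1 p.2‖) (by fun_prop)
  have hM0 : 0 ≤ M := (norm_nonneg _).trans
    (hM (0, 0) ⟨⟨le_rfl, hδ.le⟩, ⟨by linarith, hRp.le⟩⟩)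
  refine ⟨δ, 6 * C0 + M * (1 + R ^ 2), hδ, fun s x hs hsδ => ?_⟩
  have hx0 : 0 < 1 + x ^ 2 := by positivity
  by_cases hx : |x| ≤ R
  · have h1 := hM (s, x) ⟨⟨hs, hsδ⟩, abs_le.1 hx⟩
    rw [Real.norm_of_nonneg (by positivity)] at h1
    simp only at h1
    have hx2 : x ^ 2 ≤ R ^ 2 := by rw [← sq_abs]; gcongr
    have h2 : M ≤ (6 * C0 + M * (1 + R ^ 2)) / (1 + x ^ 2) := by
      rw [le_div_iff₀ hx0]
      nlinarith
    have := norm_nonneg (U s x)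
    have := norm_nonneg (V s x)
    constructor <;> linarith
  · push Not at hx
    set ε : ℝ := 3 * C0 / (1 + x ^ 2) with hε
    have hεp : 0 < ε := by positivity
    have hxx : R ≤ 1 + x ^ 2 := by
      rw [← sq_abs]; nlinarith [sq_nonneg (|x| - 1)]
    have q1 : 0 < 6 * C0 / ρ1 := by positivity
    have q2 : 0 < 6 * C0 / ρ2 := by positivity
    have hs1 : 2 * ε ≤ ρ1 := by
      have : 6 * C0 / ρ1 ≤ 1 + x ^ 2 := by linarith
      rw [div_le_iff₀ hρ1] at this
      have e : 2 * ε = 6 * C0 / (1 + x ^ 2) := by rw [hε]; ring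
      rw [e, div_le_iff₀ hx0]; linarith
    have hs2 : 2 * ε ≤ ρ2 := by
      have : 6 * C0 / ρ2 ≤ 1 + x ^ 2 := by linarith
      rw [div_le_iff₀ hρ2] at this
      have e : 2 * ε = 6 * C0 / (1 + x ^ 2) := by rw [hε]; ring
      rw [e, div_le_iff₀ hx0]; linarith
    have hdat : ∀ y, |y - x| ≤ δ → C0 / (1 + y ^ 2) ≤ ε := by
      intro y hy
      have h1 : (y - x) ^ 2 ≤ 1 := by
        rw [← sq_abs]; nlinarith [abs_nonneg (y - x)]
      rw [hε, div_le_div_iff₀ (by positivity) hx0]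
      have : 1 + x ^ 2 ≤ 3 * (1 + y ^ 2) := by nlinarith [sq_nonneg (2 * y - x)]
      nlinarith
    have tri := h.triangle (x := x) (δ := δ) (ε := ε) (κ := L * (2 * ε)) (by positivity)
      (by nlinarith)
      (fun a b ha hb => (hb1 a b _ hs1 ha hb).trans (by gcongr; linarith))
      (fun a b ha hb => (hb2 a b _ hs2 ha hb).trans (by gcongr; linarith))
      (fun y hy => (hCU y).trans (le_trans (by gcongr; linarith) (hdat y hy)))
      (fun y hy => (hCV y).trans (le_trans (by gcongr; linarith) (hdat y hy)))
      s x hs (by simpa using hsδ)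
    have h3 : 2 * ε ≤ (6 * C0 + M * (1 + R ^ 2)) / (1 + x ^ 2) := by
      have e : 2 * ε = 6 * C0 / (1 + x ^ 2) := by rw [hε]; ring
      rw [e]; gcongr
      have : 0 ≤ M * (1 + R ^ 2) := by positivity
      linarith
    exact ⟨by linarith [tri.1], by linarith [tri.2]⟩

lemma evalW_diff (W : MvPolynomial (Fin 4) ℂ) :
    Differentiable ℝ (fun p : ℂ × ℂ => evalW W p.1 p.2) := by
  have hc : Differentiable ℝ (fun z : ℂ => (starRingEnd ℂ) z) :=
    Complex.conjCLE.differentiable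
  induction W using MvPolynomial.induction_on with
  | C a => simp [evalW]
  | add p q hp hq =>
    have : (fun z : ℂ × ℂ => evalW (p + q) z.1 z.2)
        = fun z => evalW p z.1 z.2 + evalW q z.1 z.2 := by
      funext z; simp [evalW]
    rw [this]; exact hp.add hq
  | mul_X p i hp =>
    have : (fun z : ℂ × ℂ => evalW (p * MvPolynomial.X i) z.1 z.2)
        = fun z => evalW p z.1 z.2 *
          (![z.1, (starRingEnd ℂ) z.1, z.2, (starRingEnd ℂ) z.2] i) := by
      funext z; simp [evalW]
    rw [this]
    refine hp.mul ?_
    fin_cases i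
    · exact differentiable_fst
    · exact hc.comp differentiable_fst
    · exact differentiable_snd
    · exact hc.comp differentiable_snd

lemma partials {u : ℝ → ℝ → ℂ} (hu : ContDiff ℝ (⊤ : ℕ∞) (fun p : ℝ × ℝ => u p.1 p.2)) :
    (∀ t x, HasDerivAt (fun s => u s x) (deriv (fun s => u s x) t) t) ∧
    (∀ t x, HasDerivAt (fun y => u t y) (deriv (fun y => u t y) x) x) ∧
    (Continuous fun p : ℝ × ℝ => deriv (fun s => u s p.2) p.1) ∧
    (Continuous fun p : ℝ × ℝ => deriv (fun y => u p.1 y) p.2) ∧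
    (∀ (a b : ℝ → ℝ) (a' b' r : ℝ), HasDerivAt a a' r → HasDerivAt b b' r →
      HasDerivAt (fun r => u (a r) (b r))
        ((a' : ℂ) * deriv (fun s => u s (b r)) (a r)
          + (b' : ℂ) * deriv (fun y => u (a r) y) (b r)) r) := by
  have hd : Differentiable ℝ (fun p : ℝ × ℝ => u p.1 p.2) := hu.differentiable (by simp)
  have hcf : Continuous (fderiv ℝ (fun p : ℝ × ℝ => u p.1 p.2)) := hu.continuous_fderiv (by simp)
  have key : ∀ (a b : ℝ → ℝ) (a' b' r : ℝ), HasDerivAt a a' r → HasDerivAt b b' r →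
      HasDerivAt (fun r => u (a r) (b r))
        (fderiv ℝ (fun p : ℝ × ℝ => u p.1 p.2) (a r, b r) (a', b')) r := by
    intro a b a' b' r ha hb
    exact (hd (a r, b r)).hasFDerivAt.comp_hasDerivAt r (ha.prodMk hb)
  have k1 : ∀ t x, HasDerivAt (fun s => u s x)
      (fderiv ℝ (fun p : ℝ × ℝ => u p.1 p.2) (t, x) (1, 0)) t := fun t x =>
    key (fun s => s) (fun _ => x) 1 0 t (hasDerivAt_id t) (hasDerivAt_const t x)
  have k2 : ∀ t x, HasDerivAt (fun y => u t y)
      (fderiv ℝ (fun p : ℝ × ℝ => u p.1 p.2) (t, x) (0, 1)) x := fun t x =>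
    key (fun _ => t) (fun y => y) 0 1 x (hasDerivAt_const x t) (hasDerivAt_id x)
  refine ⟨fun t x => (k1 t x).differentiableAt.hasDerivAt,
    fun t x => (k2 t x).differentiableAt.hasDerivAt, ?_, ?_, ?_⟩
  · have : (fun p : ℝ × ℝ => deriv (fun s => u s p.2) p.1) =
      fun p => fderiv ℝ (fun p : ℝ × ℝ => u p.1 p.2) p (1, 0) := by
      funext p; exact (k1 p.1 p.2).deriv
    rw [this]; exact hcf.clm_apply continuous_const
  · have : (fun p : ℝ × ℝ => deriv (fun y => u p.1 y) p.2) =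
      fun p => fderiv ℝ (fun p : ℝ × ℝ => u p.1 p.2) p (0, 1) := by
      funext p; exact (k2 p.1 p.2).deriv
    rw [this]; exact hcf.clm_apply continuous_const
  · intro a b a' b' r ha hb
    have := key a b a' b' r ha hb
    rw [(k1 (a r) (b r)).deriv, (k2 (a r) (b r)).deriv]
    convert this using 1
    have e : ((a', b') : ℝ × ℝ) = a' • (1, 0) + b' • (0, 1) := by simp
    rw [e, map_add, map_smul, map_smul]
    simp

lemma schwartz_dec {f : ℝ → ℂ} (h : ∃ g : SchwartzMap ℝ ℂ, ∀ x : ℝ, g x = f x) :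
    ∃ C : ℝ, ∀ x : ℝ, ‖f x‖ ≤ C / (1 + x ^ 2) := by
  obtain ⟨g, hg⟩ := h
  obtain ⟨C0, -, h0⟩ := g.decay 0 0
  obtain ⟨C2, -, h2⟩ := g.decay 2 0
  refine ⟨C0 + C2, fun x => ?_⟩
  rw [le_div_iff₀ (by positivity), ← hg]
  have a := h0 x
  have b := h2 x
  rw [norm_iteratedFDeriv_zero] at a b
  rw [Real.norm_eq_abs, sq_abs] at b
  linarith

lemma dirac_local_decay
    (m : ℝ) (u v : ℝ → ℝ → ℂ) (W : MvPolynomial (Fin 4) ℂ)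
    (hu : ContDiff ℝ (⊤ : ℕ∞) (fun p : ℝ × ℝ => u p.1 p.2))
    (hv : ContDiff ℝ (⊤ : ℕ∞) (fun p : ℝ × ℝ => v p.1 p.2))
    (huS : ∀ t : ℝ, ∃ f : SchwartzMap ℝ ℂ, ∀ x : ℝ, f x = u t x)
    (hvS : ∀ t : ℝ, ∃ f : SchwartzMap ℝ ℂ, ∀ x : ℝ, f x = v t x)
    (hequ : ∀ t x : ℝ,
      Complex.I * (deriv (fun s => u s x) t + deriv (fun y => u t y) x) + (m : ℂ) * v t x
        = evalW (MvPolynomial.pderiv 1 W) (u t x) (v t x))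
    (heqv : ∀ t x : ℝ,
      Complex.I * (deriv (fun s => v s x) t - deriv (fun y => v t y) x) + (m : ℂ) * u t x
        = evalW (MvPolynomial.pderiv 3 W) (u t x) (v t x)) (t₀ : ℝ) :
    ∃ δ C : ℝ, 0 < δ ∧ ∀ t x, |t - t₀| ≤ δ →
      ‖u t x‖ ≤ C / (1 + x ^ 2) ∧ ‖v t x‖ ≤ C / (1 + x ^ 2) := by
  obtain ⟨-, -, -, -, cu⟩ := partials hu
  obtain ⟨-, -, -, -, cv⟩ := partials hv
  let G1 : ℂ × ℂ → ℂ := fun p =>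
    -Complex.I * (evalW (MvPolynomial.pderiv 1 W) p.1 p.2 - (m : ℂ) * p.2)
  let G2 : ℂ × ℂ → ℂ := fun p =>
    -Complex.I * (evalW (MvPolynomial.pderiv 3 W) p.1 p.2 - (m : ℂ) * p.1)
  have dG1 : Differentiable ℝ G1 :=
    ((evalW_diff _).sub (differentiable_snd.const_mul _)).const_mul _
  have dG2 : Differentiable ℝ G2 :=
    ((evalW_diff _).sub (differentiable_fst.const_mul _)).const_mul _
  have e1 : ∀ t x, deriv (fun s => u s x) t + deriv (fun y => u t y) x
      = G1 (u t x, v t x) := by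
    intro t x
    simp only [G1]
    rw [← hequ]
    linear_combination ((deriv (fun s => u s x) t + deriv (fun y => u t y) x)) * Complex.I_mul_I
  have e2 : ∀ t x, deriv (fun s => v s x) t - deriv (fun y => v t y) x
      = G2 (u t x, v t x) := by
    intro t x
    simp only [G2]
    rw [← heqv]
    linear_combination ((deriv (fun s => v s x) t - deriv (fun y => v t y) x)) * Complex.I_mul_I
  have hadd : ∀ c r : ℝ, HasDerivAt (fun r => c + r) 1 r := fun c r =>
    (hasDerivAt_id r).const_add c
  have hsub : ∀ c r : ℝ, HasDerivAt (fun r => c - r) (-1) r := fun c r =>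
    (hasDerivAt_id r).const_sub c
  have S1 : CharSys G1 G2 (fun s x => u (t₀ + s) x) (fun s x => v (t₀ + s) x) := by
    refine ⟨?_, ?_, ?_, ?_, fun r => schwartz_dec (huS _), fun r => schwartz_dec (hvS _)⟩
    · exact hu.continuous.comp (by fun_prop : Continuous fun p : ℝ × ℝ => (t₀ + p.1, p.2))
    · exact hv.continuous.comp (by fun_prop : Continuous fun p : ℝ × ℝ => (t₀ + p.1, p.2))
    · intro y r
      convert cu (fun r => t₀ + r) (fun r => y + r) 1 1 r (hadd _ _) (hadd _ _) using 1
      rw [← e1]; simp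
    · intro y r
      convert cv (fun r => t₀ + r) (fun r => y - r) 1 (-1) r (hadd _ _) (hsub _ _) using 1
      rw [← e2]; push_cast; ring
  have S2 : CharSys (fun p => -G2 (p.2, p.1)) (fun p => -G1 (p.2, p.1))
      (fun s x => v (t₀ - s) x) (fun s x => u (t₀ - s) x) := by
    refine ⟨?_, ?_, ?_, ?_, fun r => schwartz_dec (hvS _), fun r => schwartz_dec (huS _)⟩
    · exact hv.continuous.comp (by fun_prop : Continuous fun p : ℝ × ℝ => (t₀ - p.1, p.2))
    · exact hu.continuous.comp (by fun_prop : Continuous fun p : ℝ × ℝ => (t₀ - p.1, p.2))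
    · intro y r
      convert cv (fun r => t₀ - r) (fun r => y + r) (-1) 1 r (hsub _ _) (hadd _ _) using 1
      simp only
      rw [← e2]; push_cast; ring
    · intro y r
      convert cu (fun r => t₀ - r) (fun r => y - r) (-1) (-1) r (hsub _ _) (hsub _ _) using 1
      simp only
      rw [← e1]; push_cast; ring
  have hswap : Differentiable ℝ (fun p : ℂ × ℂ => (p.2, p.1)) := by fun_prop
  obtain ⟨δ1, C1, hδ1, h1⟩ := S1.decay (dG1 _) (dG2 _)
  obtain ⟨δ2, C2, hδ2, h2⟩ := S2.decay ((dG2.comp hswap).neg _) ((dG1.comp hswap).neg _)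
  refine ⟨min δ1 δ2, max C1 C2, lt_min hδ1 hδ2, fun t x ht => ?_⟩
  rw [abs_le] at ht
  rcases le_total t₀ t with hle | hle
  · have := h1 (t - t₀) x (by linarith) (ht.2.trans (min_le_left _ _))
    simp only [add_sub_cancel] at this
    have hm : C1 / (1 + x ^ 2) ≤ max C1 C2 / (1 + x ^ 2) := by
      gcongr; exact le_max_left _ _
    exact ⟨this.1.trans hm, this.2.trans hm⟩
  · have := h2 (t₀ - t) x (by linarith) (le_trans (by linarith [ht.1]) (min_le_right δ1 δ2))
    simp only [sub_sub_cancel] at this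
    have hm : C2 / (1 + x ^ 2) ≤ max C1 C2 / (1 + x ^ 2) := by
      gcongr; exact le_max_right _ _
    exact ⟨this.2.trans hm, this.1.trans hm⟩

lemma hasDerivAt_norm_sq' {f : ℝ → ℂ} {f' : ℂ} {t : ℝ} (h : HasDerivAt f f' t) :
    HasDerivAt (fun s => ‖f s‖ ^ 2) (2 * ((f t).re * f'.re + (f t).im * f'.im)) t := by
  convert h.norm_sq using 1
  rw [Complex.inner]
  simp [Complex.mul_re]
  ring

lemma integrable_of_le {f : ℝ → ℝ} {C : ℝ} (hf : Continuous f)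
    (hb : ∀ x, |f x| ≤ C / (1 + x ^ 2)) : Integrable f := by
  refine (integrable_inv_one_add_sq.const_mul C).mono' hf.aestronglyMeasurable ?_
  exact Eventually.of_forall fun x => by
    rw [Real.norm_eq_abs, ← div_eq_mul_inv]; exact hb x

/-- Differentiation under the integral sign, up to a spatial divergence. -/
lemma hasDerivAt_integral_div {F dF E dE : ℝ → ℝ → ℝ} {t₀ δ C : ℝ} (hδ : 0 < δ)
    (hF : ∀ t x, HasDerivAt (fun s => F s x) (dF t x) t)
    (hE : ∀ t x, HasDerivAt (fun y => E t y) (dE t x) x)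
    (cF : Continuous fun p : ℝ × ℝ => F p.1 p.2)
    (cdF : Continuous fun p : ℝ × ℝ => dF p.1 p.2)
    (cdE : Continuous fun p : ℝ × ℝ => dE p.1 p.2)
    (bF : ∀ t x, |t - t₀| ≤ δ → |F t x| ≤ C / (1 + x ^ 2))
    (bE : ∀ t x, |t - t₀| ≤ δ → |E t x| ≤ C / (1 + x ^ 2))
    (bh : ∀ t x, |t - t₀| ≤ δ → |dF t x + dE t x| ≤ C / (1 + x ^ 2)) :
    HasDerivAt (fun s => ∫ x, F s x) (∫ x, (dF t₀ x + dE t₀ x)) t₀ := by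
  have sl : ∀ {f : ℝ → ℝ → ℝ}, (Continuous fun p : ℝ × ℝ => f p.1 p.2) → ∀ t, Continuous (f t) :=
    fun {f} hf t => hf.comp (by fun_prop : Continuous fun x : ℝ => (t, x))
  have hball : ∀ t ∈ Metric.ball t₀ δ, |t - t₀| ≤ δ := fun t ht => by
    rw [Metric.mem_ball, Real.dist_eq] at ht; exact ht.le
  have hC0 : 0 ≤ C := by
    have := (abs_nonneg _).trans (bF t₀ 0 (by simpa using hδ.le))
    simpa using this
  have hI : Integrable fun x : ℝ => C / (1 + x ^ 2) := by
    simpa only [div_eq_mul_inv] using integrable_inv_one_add_sq.const_mul C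
  have hh : ∀ t, Continuous fun x => dF t x + dE t x := fun t => (sl cdF t).add (sl cdE t)
  have hnat : Tendsto (fun n : ℕ => (n : ℝ)) atTop atTop := tendsto_natCast_atTop_atTop
  have hneg : Tendsto (fun n : ℕ => -(n : ℝ)) atTop atBot := tendsto_neg_atTop_atBot.comp hnat
  refine hasDerivAt_of_tendstoUniformlyOn (l := atTop) (s := Metric.ball t₀ δ)
    (f := fun (n : ℕ) s => ∫ x in (-(n : ℝ))..n, F s x)
    (f' := fun (n : ℕ) s => (∫ x in (-(n : ℝ))..n, (dF s x + dE s x)) - (E s n - E s (-n)))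
    (g' := fun s => ∫ x, (dF s x + dE s x))
    Metric.isOpen_ball ?_ ?_ ?_ (Metric.mem_ball_self hδ)
  · -- uniform convergence
    rw [Metric.tendstoUniformlyOn_iff]
    intro ε hε
    have l1 : Tendsto (fun n : ℕ => (∫ x : ℝ, C / (1 + x ^ 2))
        - ∫ x in (-(n : ℝ))..n, C / (1 + x ^ 2)) atTop (nhds 0) := by
      have := (intervalIntegral_tendsto_integral hI hneg hnat).const_sub
        (∫ x : ℝ, C / (1 + x ^ 2))
      simpa using this
    have l2 : Tendsto (fun n : ℕ => C / (1 + (n : ℝ) ^ 2)) atTop (nhds 0) := by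
      refine Tendsto.div_atTop tendsto_const_nhds ?_
      exact tendsto_atTop_add_const_left _ _ ((tendsto_pow_atTop two_ne_zero).comp hnat)
    have l3 := l1.add (l2.const_mul 2)
    simp only [mul_zero, add_zero] at l3
    filter_upwards [l3.eventually (gt_mem_nhds hε)] with n hn t ht
    have ht' := hball t ht
    have hi := integrable_of_le (hh t) (fun x => bh t x ht')
    have hnn : -(n : ℝ) ≤ n := by
      have : (0 : ℝ) ≤ n := Nat.cast_nonneg n
      linarith
    have tail : ∀ f : ℝ → ℝ, Integrable f →
        (∫ x, f x) - ∫ x in (-(n : ℝ))..n, f x = ∫ x in (Set.Ioc (-(n : ℝ)) n)ᶜ, f x := by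
      intro f hf
      rw [intervalIntegral.integral_of_le hnn, ← integral_add_compl measurableSet_Ioc hf]
      ring
    have key : |(∫ x, (dF t x + dE t x)) - ∫ x in (-(n : ℝ))..n, (dF t x + dE t x)|
        ≤ (∫ x : ℝ, C / (1 + x ^ 2)) - ∫ x in (-(n : ℝ))..n, C / (1 + x ^ 2) := by
      rw [tail _ hi, tail _ hI, ← Real.norm_eq_abs]
      refine norm_integral_le_of_norm_le hI.integrableOn ?_
      exact Eventually.of_forall fun x => bh t x ht'
    have b1 := bE t n ht'
    have b2 := bE t (-n) ht'
    rw [neg_sq] at b2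
    rw [Real.dist_eq]
    rw [abs_le] at b1 b2 key
    refine lt_of_le_of_lt ?_ hn
    rw [abs_le]
    constructor <;> linarith [b1.1, b1.2, b2.1, b2.2, key.1, key.2]
  · refine Eventually.of_forall fun n t ht => ?_
    have ftc : ∫ x in (-(n : ℝ))..n, dE t x = E t n - E t (-n) :=
      intervalIntegral.integral_eq_sub_of_hasDerivAt (fun x _ => hE t x)
        ((sl cdE t).intervalIntegrable _ _)
    rw [intervalIntegral.integral_add ((sl cdF t).intervalIntegrable _ _)
      ((sl cdE t).intervalIntegrable _ _), ftc, add_sub_cancel_right]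
    obtain ⟨M, hM⟩ := (isCompact_Icc.prod isCompact_Icc :
      IsCompact (Set.Icc (t - 1) (t + 1) ×ˢ Set.Icc (-(n : ℝ)) n)).exists_bound_of_continuousOn
      (f := fun p : ℝ × ℝ => dF p.1 p.2) cdF.continuousOn
    refine (intervalIntegral.hasDerivAt_integral_of_dominated_loc_of_deriv_le
      (s := Set.Icc (t - 1) (t + 1)) (bound := fun _ => M) (F' := dF)
      (Icc_mem_nhds (by linarith) (by linarith)) ?_ ?_ ?_ ?_ ?_ ?_).2
    · exact Eventually.of_forall fun s => (sl cF s).aestronglyMeasurable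
    · exact (sl cF t).intervalIntegrable _ _
    · exact (sl cdF t).aestronglyMeasurable
    · refine Eventually.of_forall fun x hx s hs => hM (s, x) ⟨hs, ?_⟩
      rw [Set.uIoc_of_le (by have : (0 : ℝ) ≤ n := Nat.cast_nonneg n
                             linarith)] at hx
      exact ⟨hx.1.le, hx.2⟩
    · exact continuous_const.intervalIntegrable _ _
    · exact Eventually.of_forall fun x _ s _ => hF s x
  · intro t ht
    exact intervalIntegral_tendsto_integral
      (integrable_of_le (sl cF t) (fun x => bF t x (hball t ht))) hneg hnat

/-- Lemma 3.4 (`lem:u-v`): the virial identity for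
`J(t) = ∫ ϕ(x/λ(t)) (|u|²−|v|²)` for the 1D Dirac system. -/
theorem dirac_1d_virial_J
    (m : ℝ) (u v : ℝ → ℝ → ℂ)
    (W : MvPolynomial (Fin 4) ℂ)
    -- u conj(∂_{ū}W) − v conj(∂_{v̄}W) is real
    (hWreal : ∀ z w : ℂ,
      (z * (starRingEnd ℂ) (evalW (MvPolynomial.pderiv 1 W) z w)
        - w * (starRingEnd ℂ) (evalW (MvPolynomial.pderiv 3 W) z w)).im = 0)
    (hu : ContDiff ℝ (⊤ : ℕ∞) (fun p : ℝ × ℝ => u p.1 p.2))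
    (hv : ContDiff ℝ (⊤ : ℕ∞) (fun p : ℝ × ℝ => v p.1 p.2))
    (huS : ∀ t : ℝ, ∃ f : SchwartzMap ℝ ℂ, ∀ x : ℝ, f x = u t x)
    (hvS : ∀ t : ℝ, ∃ f : SchwartzMap ℝ ℂ, ∀ x : ℝ, f x = v t x)
    (hequ : ∀ t x : ℝ,
      Complex.I * (deriv (fun s => u s x) t + deriv (fun y => u t y) x) + (m : ℂ) * v t x
        = evalW (MvPolynomial.pderiv 1 W) (u t x) (v t x))
    (heqv : ∀ t x : ℝ,
      Complex.I * (deriv (fun s => v s x) t - deriv (fun y => v t y) x) + (m : ℂ) * u t x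
        = evalW (MvPolynomial.pderiv 3 W) (u t x) (v t x))
    -- the weight and the scaling function
    (ϕ : ℝ → ℝ)
    (hϕ : ContDiff ℝ (⊤ : ℕ∞) ϕ)
    (hϕbdd : ∃ C : ℝ, ∀ x : ℝ, |ϕ x| + |deriv ϕ x| ≤ C)
    (lam : ℝ → ℝ) (hlam : ContDiff ℝ 1 lam) (hlampos : ∀ t, 0 < lam t) :
    ∀ t : ℝ,
      HasDerivAt
        (fun s : ℝ => ∫ x : ℝ, ϕ (x / lam s) * (‖u s x‖ ^ 2 - ‖v s x‖ ^ 2))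
        (-(deriv lam t / lam t) *
            (∫ x : ℝ, (x / lam t) * deriv ϕ (x / lam t) * (‖u t x‖ ^ 2 - ‖v t x‖ ^ 2))
          + (1 / lam t) *
            (∫ x : ℝ, deriv ϕ (x / lam t) * (‖u t x‖ ^ 2 + ‖v t x‖ ^ 2))
          + 4 * m *
            (∫ x : ℝ, ϕ (x / lam t) * (u t x * (starRingEnd ℂ) (v t x)).im)) t := by
  intro t₀
  obtain ⟨δ0, C, hδ0, hdec⟩ := dirac_local_decay m u v W hu hv huS hvS hequ heqv t₀
  obtain ⟨hut, hux, cut, cux, -⟩ := partials hu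
  obtain ⟨hvt, hvx, cvt, cvx, -⟩ := partials hv
  obtain ⟨B, hB⟩ := hϕbdd
  have hB1 : ∀ x, |ϕ x| ≤ B := fun x => by linarith [hB x, abs_nonneg (deriv ϕ x)]
  have hB2 : ∀ x, |deriv ϕ x| ≤ B := fun x => by linarith [hB x, abs_nonneg (ϕ x)]
  have hB0 : 0 ≤ B := (abs_nonneg _).trans (hB1 0)
  have hϕd : ∀ x, HasDerivAt ϕ (deriv ϕ x) x := fun x =>
    (hϕ.differentiable (by simp) x).hasDerivAt
  have hϕc : Continuous ϕ := hϕ.continuous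
  have hϕ'c : Continuous (deriv ϕ) := hϕ.continuous_deriv (by simp)
  have hlamd : ∀ t, HasDerivAt lam (deriv lam t) t := fun t =>
    (hlam.differentiable (by simp) t).hasDerivAt
  have hlamc : Continuous lam := hlam.continuous
  have hlam'c : Continuous (deriv lam) := hlam.continuous_deriv (by simp)
  have hlne : ∀ t, lam t ≠ 0 := fun t => (hlampos t).ne'
  have cu : Continuous fun p : ℝ × ℝ => u p.1 p.2 := hu.continuous
  have cv : Continuous fun p : ℝ × ℝ => v p.1 p.2 := hv.continuous
  have cq : Continuous fun p : ℝ × ℝ => p.2 / lam p.1 :=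
    continuous_snd.div (hlamc.comp continuous_fst) (fun p => hlne _)
  -- bounds for the scaling function
  obtain ⟨A1, hA1⟩ := (isCompact_Icc : IsCompact (Set.Icc (t₀ - δ0) (t₀ + δ0))).exists_bound_of_continuousOn
    (f := fun t => deriv lam t / lam t) (hlam'c.div hlamc hlne).continuousOn
  obtain ⟨A2, hA2⟩ := (isCompact_Icc : IsCompact (Set.Icc (t₀ - δ0) (t₀ + δ0))).exists_bound_of_continuousOn
    (f := fun t => 1 / lam t) (continuous_const.div hlamc hlne).continuousOn
  have hmem : ∀ t, |t - t₀| ≤ δ0 → t ∈ Set.Icc (t₀ - δ0) (t₀ + δ0) := fun t ht => by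
    rw [abs_le] at ht
    exact ⟨by linarith [ht.1], by linarith [ht.2]⟩
  have hA10 : 0 ≤ A1 := (norm_nonneg _).trans (hA1 t₀ (hmem t₀ (by simpa using hδ0.le)))
  have hA20 : 0 ≤ A2 := (norm_nonneg _).trans (hA2 t₀ (hmem t₀ (by simpa using hδ0.le)))
  -- the densities and their derivatives
  let ρ : ℝ → ℝ → ℝ := fun t x => ‖u t x‖ ^ 2 - ‖v t x‖ ^ 2
  let e : ℝ → ℝ → ℝ := fun t x => ‖u t x‖ ^ 2 + ‖v t x‖ ^ 2
  let g : ℝ → ℝ → ℝ := fun t x => (u t x * (starRingEnd ℂ) (v t x)).im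
  let ρt : ℝ → ℝ → ℝ := fun t x =>
    2 * ((u t x).re * (deriv (fun s => u s x) t).re + (u t x).im * (deriv (fun s => u s x) t).im)
    - 2 * ((v t x).re * (deriv (fun s => v s x) t).re + (v t x).im * (deriv (fun s => v s x) t).im)
  let ex : ℝ → ℝ → ℝ := fun t x =>
    2 * ((u t x).re * (deriv (fun y => u t y) x).re + (u t x).im * (deriv (fun y => u t y) x).im)
    + 2 * ((v t x).re * (deriv (fun y => v t y) x).re + (v t x).im * (deriv (fun y => v t y) x).im)
  have hρt : ∀ t x, HasDerivAt (fun s => ρ s x) (ρt t x) t := fun t x =>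
    (hasDerivAt_norm_sq' (hut t x)).sub (hasDerivAt_norm_sq' (hvt t x))
  have hex : ∀ t x, HasDerivAt (fun y => e t y) (ex t x) x := fun t x =>
    (hasDerivAt_norm_sq' (hux t x)).add (hasDerivAt_norm_sq' (hvx t x))
  have cρ : Continuous fun p : ℝ × ℝ => ρ p.1 p.2 := (cu.norm.pow 2).sub (cv.norm.pow 2)
  have ce : Continuous fun p : ℝ × ℝ => e p.1 p.2 := (cu.norm.pow 2).add (cv.norm.pow 2)
  have cg : Continuous fun p : ℝ × ℝ => g p.1 p.2 :=
    Complex.continuous_im.comp (cu.mul (Complex.continuous_conj.comp cv))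
  have cre : ∀ {f : ℝ × ℝ → ℂ}, Continuous f → Continuous fun p => (f p).re :=
    fun hf => Complex.continuous_re.comp hf
  have cim : ∀ {f : ℝ × ℝ → ℂ}, Continuous f → Continuous fun p => (f p).im :=
    fun hf => Complex.continuous_im.comp hf
  have cρt : Continuous fun p : ℝ × ℝ => ρt p.1 p.2 :=
    (continuous_const.mul (((cre cu).mul (cre cut)).add ((cim cu).mul (cim cut)))).sub
      (continuous_const.mul (((cre cv).mul (cre cvt)).add ((cim cv).mul (cim cvt))))
  have cex : Continuous fun p : ℝ × ℝ => ex p.1 p.2 :=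
    (continuous_const.mul (((cre cu).mul (cre cux)).add ((cim cu).mul (cim cux)))).add
      (continuous_const.mul (((cre cv).mul (cre cvx)).add ((cim cv).mul (cim cvx))))
  have hcons : ∀ t x, ρt t x + ex t x = 4 * m * g t x := by
    intro t x
    have h1 := hequ t x
    have h2 := heqv t x
    have h3 := hWreal (u t x) (v t x)
    rw [← h1, ← h2] at h3
    simp only [Complex.sub_im, Complex.mul_im, Complex.conj_re, Complex.conj_im, Complex.add_re,
      Complex.add_im, Complex.mul_re, Complex.I_re, Complex.I_im, Complex.ofReal_re,
      Complex.ofReal_im, Complex.sub_re] at h3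
    simp only [ρt, ex, g, Complex.mul_im, Complex.conj_re, Complex.conj_im]
    linear_combination (-2) * h3
  -- pointwise decay of the densities
  have hw : ∀ t x, |t - t₀| ≤ δ0 → |ρ t x| ≤ 2 * (C ^ 2 / (1 + x ^ 2)) ∧
      |x| * |ρ t x| ≤ 2 * (C ^ 2 / (1 + x ^ 2)) ∧ |e t x| ≤ 2 * (C ^ 2 / (1 + x ^ 2)) ∧
      |g t x| ≤ C ^ 2 / (1 + x ^ 2) := by
    intro t x ht
    obtain ⟨h1, h2⟩ := hdec t x ht
    have hx0 : 0 < 1 + x ^ 2 := by positivity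
    have hCx : 0 ≤ C / (1 + x ^ 2) := (norm_nonneg _).trans h1
    have q1 : ‖u t x‖ ^ 2 ≤ (C / (1 + x ^ 2)) ^ 2 := by gcongr
    have q2 : ‖v t x‖ ^ 2 ≤ (C / (1 + x ^ 2)) ^ 2 := by gcongr
    have q3 : ‖u t x‖ * ‖v t x‖ ≤ (C / (1 + x ^ 2)) ^ 2 := by rw [sq]; gcongr
    have p1 := sq_nonneg ‖u t x‖
    have p2 := sq_nonneg ‖v t x‖
    have r1 : (C / (1 + x ^ 2)) ^ 2 ≤ C ^ 2 / (1 + x ^ 2) := by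
      rw [div_pow]
      gcongr
      nlinarith [sq_nonneg x, sq_nonneg (x ^ 2)]
    have r2 : |x| * (C / (1 + x ^ 2)) ^ 2 ≤ C ^ 2 / (1 + x ^ 2) := by
      rw [div_pow, ← mul_div_assoc, div_le_div_iff₀ (by positivity) hx0]
      have : |x| ≤ 1 + x ^ 2 := by
        rw [← sq_abs]; nlinarith [sq_nonneg (|x| - 1), abs_nonneg x]
      have h5 : 0 ≤ C ^ 2 * (1 + x ^ 2) := by positivity
      nlinarith
    have s1 : |ρ t x| ≤ 2 * (C / (1 + x ^ 2)) ^ 2 := by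
      simp only [ρ]; rw [abs_le]; constructor <;> linarith
    refine ⟨by linarith, ?_, ?_, ?_⟩
    · calc |x| * |ρ t x| ≤ |x| * (2 * (C / (1 + x ^ 2)) ^ 2) := by gcongr
        _ = 2 * (|x| * (C / (1 + x ^ 2)) ^ 2) := by ring
        _ ≤ _ := by linarith
    · simp only [e]; rw [abs_le]; constructor <;> linarith
    · refine (Complex.abs_im_le_norm _).trans ?_
      rw [norm_mul, RCLike.norm_conj]
      linarith
  -- the three integrands
  let T1 : ℝ → ℝ → ℝ := fun t x => (x / lam t) * deriv ϕ (x / lam t) * ρ t x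
  let T2 : ℝ → ℝ → ℝ := fun t x => deriv ϕ (x / lam t) * e t x
  let T3 : ℝ → ℝ → ℝ := fun t x => ϕ (x / lam t) * g t x
  have bT1 : ∀ t x, |t - t₀| ≤ δ0 → |T1 t x| ≤ (A2 * B * (2 * C ^ 2)) / (1 + x ^ 2) := by
    intro t x ht
    obtain ⟨h1, h2, h3, h4⟩ := hw t x ht
    have hl := hA2 t (hmem t ht)
    rw [Real.norm_eq_abs] at hl
    have : T1 t x = (1 / lam t) * deriv ϕ (x / lam t) * (x * ρ t x) := by
      simp only [T1]; ring
    rw [this, abs_mul, abs_mul, abs_mul]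
    calc |1 / lam t| * |deriv ϕ (x / lam t)| * (|x| * |ρ t x|)
        ≤ A2 * B * (2 * (C ^ 2 / (1 + x ^ 2))) := by
          gcongr
          exact hB2 _
      _ = _ := by ring
  have bT2 : ∀ t x, |t - t₀| ≤ δ0 → |T2 t x| ≤ (B * (2 * C ^ 2)) / (1 + x ^ 2) := by
    intro t x ht
    obtain ⟨h1, h2, h3, h4⟩ := hw t x ht
    simp only [T2]
    rw [abs_mul]
    calc |deriv ϕ (x / lam t)| * |e t x|
        ≤ B * (2 * (C ^ 2 / (1 + x ^ 2))) := by
          gcongr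
          exact hB2 _
      _ = _ := by ring
  have bT3 : ∀ t x, |t - t₀| ≤ δ0 → |T3 t x| ≤ (B * C ^ 2) / (1 + x ^ 2) := by
    intro t x ht
    obtain ⟨h1, h2, h3, h4⟩ := hw t x ht
    simp only [T3]
    rw [abs_mul]
    calc |ϕ (x / lam t)| * |g t x|
        ≤ B * (C ^ 2 / (1 + x ^ 2)) := by
          gcongr
          exact hB1 _
      _ = _ := by ring
  have cslice : Continuous fun x : ℝ => ((t₀, x) : ℝ × ℝ) := by fun_prop
  have cT1 : Continuous (T1 t₀) :=
    ((cq.mul (hϕ'c.comp cq)).mul cρ).comp cslice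
  have cT2 : Continuous (T2 t₀) := ((hϕ'c.comp cq).mul ce).comp cslice
  have cT3 : Continuous (T3 t₀) := ((hϕc.comp cq).mul cg).comp cslice
  have ht₀ : |t₀ - t₀| ≤ δ0 := by simpa using hδ0.le
  have iT1 := integrable_of_le cT1 (fun x => bT1 t₀ x ht₀)
  have iT2 := integrable_of_le cT2 (fun x => bT2 t₀ x ht₀)
  have iT3 := integrable_of_le cT3 (fun x => bT3 t₀ x ht₀)
  -- the flux form
  let F : ℝ → ℝ → ℝ := fun t x => ϕ (x / lam t) * ρ t x
  let dF : ℝ → ℝ → ℝ := fun t x =>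
    deriv ϕ (x / lam t) * (-(x * deriv lam t) / lam t ^ 2) * ρ t x + ϕ (x / lam t) * ρt t x
  let E : ℝ → ℝ → ℝ := fun t x => ϕ (x / lam t) * e t x
  let dE : ℝ → ℝ → ℝ := fun t x =>
    deriv ϕ (x / lam t) * (1 / lam t) * e t x + ϕ (x / lam t) * ex t x
  have hdF : ∀ t x, HasDerivAt (fun s => F s x) (dF t x) t := by
    intro t x
    have h1 : HasDerivAt (fun s => x / lam s) (-(x * deriv lam t) / lam t ^ 2) t := by
      have h0 := (hasDerivAt_const t x).div (hlamd t) (hlne t)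
      rw [zero_mul, zero_sub] at h0
      exact h0
    exact ((hϕd (x / lam t)).comp t h1).mul (hρt t x)
  have hdE : ∀ t x, HasDerivAt (fun y => E t y) (dE t x) x := by
    intro t x
    have h1 : HasDerivAt (fun y => y / lam t) (1 / lam t) x := (hasDerivAt_id x).div_const _
    exact ((hϕd (x / lam t)).comp x h1).mul (hex t x)
  have hsum : ∀ t x, dF t x + dE t x =
      -(deriv lam t / lam t) * T1 t x + (1 / lam t) * T2 t x + 4 * m * T3 t x := by
    intro t x
    have h1 := hcons t x
    have h2 := hlne t
    simp only [dF, dE, T1, T2, T3]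
    field_simp
    linear_combination (ϕ (x / lam t) * lam t ^ 2) * h1
  have cl2 : Continuous fun p : ℝ × ℝ => -(p.2 * deriv lam p.1) / lam p.1 ^ 2 :=
    ((continuous_snd.mul (hlam'c.comp continuous_fst)).neg).div
      ((hlamc.comp continuous_fst).pow 2) (fun p => pow_ne_zero 2 (hlne _))
  have cl1 : Continuous fun p : ℝ × ℝ => 1 / lam p.1 :=
    continuous_const.div (hlamc.comp continuous_fst) (fun p => hlne _)
  have main := hasDerivAt_integral_div (F := F) (dF := dF) (E := E) (dE := dE) (t₀ := t₀)
    (C := B * (2 * C ^ 2) + (A1 * (A2 * B * (2 * C ^ 2)) + A2 * (B * (2 * C ^ 2))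
      + |4 * m| * (B * C ^ 2))) hδ0 hdF hdE
    ((hϕc.comp cq).mul cρ)
    ((((hϕ'c.comp cq).mul cl2).mul cρ).add ((hϕc.comp cq).mul cρt))
    ((((hϕ'c.comp cq).mul cl1).mul ce).add ((hϕc.comp cq).mul cex))
    (by
      intro t x ht
      obtain ⟨h1, h2, h3, h4⟩ := hw t x ht
      simp only [F]
      rw [abs_mul]
      calc |ϕ (x / lam t)| * |ρ t x| ≤ B * (2 * (C ^ 2 / (1 + x ^ 2))) := by
            gcongr
            exact hB1 _
        _ = (B * (2 * C ^ 2)) / (1 + x ^ 2) := by ring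
        _ ≤ _ := by
            gcongr
            have : 0 ≤ A1 * (A2 * B * (2 * C ^ 2)) + A2 * (B * (2 * C ^ 2))
              + |4 * m| * (B * C ^ 2) := by positivity
            linarith)
    (by
      intro t x ht
      obtain ⟨h1, h2, h3, h4⟩ := hw t x ht
      simp only [E]
      rw [abs_mul]
      calc |ϕ (x / lam t)| * |e t x| ≤ B * (2 * (C ^ 2 / (1 + x ^ 2))) := by
            gcongr
            exact hB1 _
        _ = (B * (2 * C ^ 2)) / (1 + x ^ 2) := by ring
        _ ≤ _ := by
            gcongr
            have : 0 ≤ A1 * (A2 * B * (2 * C ^ 2)) + A2 * (B * (2 * C ^ 2))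
              + |4 * m| * (B * C ^ 2) := by positivity
            linarith)
    (by
      intro t x ht
      have b1 := bT1 t x ht
      have b2 := bT2 t x ht
      have b3 := bT3 t x ht
      have l1 := hA1 t (hmem t ht)
      have l2 := hA2 t (hmem t ht)
      rw [Real.norm_eq_abs] at l1 l2
      rw [hsum]
      calc |-(deriv lam t / lam t) * T1 t x + (1 / lam t) * T2 t x + 4 * m * T3 t x|
          ≤ |-(deriv lam t / lam t) * T1 t x| + |(1 / lam t) * T2 t x| + |4 * m * T3 t x| :=
            abs_add_three _ _ _
        _ = |deriv lam t / lam t| * |T1 t x| + |1 / lam t| * |T2 t x| + |4 * m| * |T3 t x| := by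
            rw [abs_mul _ (T1 t x), abs_mul _ (T2 t x), abs_mul _ (T3 t x), abs_neg]
        _ ≤ A1 * ((A2 * B * (2 * C ^ 2)) / (1 + x ^ 2)) + A2 * ((B * (2 * C ^ 2)) / (1 + x ^ 2))
            + |4 * m| * ((B * C ^ 2) / (1 + x ^ 2)) := by gcongr
        _ = (A1 * (A2 * B * (2 * C ^ 2)) + A2 * (B * (2 * C ^ 2))
            + |4 * m| * (B * C ^ 2)) / (1 + x ^ 2) := by ring
        _ ≤ _ := by
            refine div_le_div_of_nonneg_right ?_ (by positivity)
            have : 0 ≤ B * (2 * C ^ 2) := by positivity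
            linarith)
  have hval : ∫ x, (dF t₀ x + dE t₀ x) =
      -(deriv lam t₀ / lam t₀) * (∫ x, T1 t₀ x) + (1 / lam t₀) * (∫ x, T2 t₀ x)
        + 4 * m * (∫ x, T3 t₀ x) := by
    simp only [hsum]
    have i12 : Integrable fun x =>
        -(deriv lam t₀ / lam t₀) * T1 t₀ x + (1 / lam t₀) * T2 t₀ x :=
      (iT1.const_mul _).add (iT2.const_mul _)
    rw [integral_add i12 (iT3.const_mul _), integral_add (iT1.const_mul _) (iT2.const_mul _), integral_const_mul, integral_const_mul,
      integral_const_mul]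
  rw [hval] at main
  exact main
end

section
/- Let n ≥ 1, N ≥ 1, m ∈ ℝ, let α¹, …, αⁿ, β be Hermitian N × N complex matrices with αʲαᵏ + αᵏαʲ = 2δ_{jk}·Id, αʲβ + βαʲ = 0, β² = Id, let V : ℝⁿ × ℂᴺ → ℝ be real-valued, and let ψ be a global classical solution of i∂_tψ = −i Σ_j αʲ∂_jψ + (m + V(x,ψ))βψ. Fix λ > 0 and b > 0, set θ = (θ₁,…,θₙ) with θ_j = −(1+b) for all j, and define ϕ(x) = Σ_{j=1}^n tanh(x_j) and I(t) = ∫_{ℝⁿ} ϕ((x + tθ)/λ) ψ(t,x)†ψ(t,x) dx. Then for all t: d/dt I(t) ≤ −(b/λ) Σ_{j=1}^n ∫_{ℝⁿ} sech²((x_j − (1+b)t)/λ) ψ(t,x)†ψ(t,x) dx. -/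
open MeasureTheory Filter Matrix

namespace DiracVirial

open Topology

/-- Joint continuous differentiability. -/
def C1 {n : ℕ} (f : ℝ → (Fin n → ℝ) → ℝ) : Prop :=
  ContDiff ℝ 1 (fun p : ℝ × (Fin n → ℝ) => f p.1 p.2)

/-- Time derivative. -/
noncomputable def Dt {n : ℕ} (f : ℝ → (Fin n → ℝ) → ℝ) (s : ℝ) (x : Fin n → ℝ) : ℝ :=
  deriv (fun r => f r x) s

/-- Space derivative. -/
noncomputable def Dx {n : ℕ} (f : ℝ → (Fin n → ℝ) → ℝ) (k : Fin n) (s : ℝ) (x : Fin n → ℝ) : ℝ :=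
  fderiv ℝ (f s) x (Pi.single k 1)

variable {n : ℕ}

lemma C1.slice {f : ℝ → (Fin n → ℝ) → ℝ} (hf : C1 f) (s : ℝ) : ContDiff ℝ 1 (f s) :=
  hf.comp (contDiff_const.prodMk contDiff_id : ContDiff ℝ 1 (fun x : Fin n → ℝ => (s, x)))

lemma C1.cont {f : ℝ → (Fin n → ℝ) → ℝ} (hf : C1 f) (s : ℝ) : Continuous (f s) :=
  (hf.slice s).continuous

lemma C1.diff {f : ℝ → (Fin n → ℝ) → ℝ} (hf : C1 f) (s : ℝ) : Differentiable ℝ (f s) :=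
  (hf.slice s).differentiable one_ne_zero

lemma C1.tslice {f : ℝ → (Fin n → ℝ) → ℝ} (hf : C1 f) (x : Fin n → ℝ) :
    ContDiff ℝ 1 (fun s => f s x) :=
  hf.comp (contDiff_id.prodMk contDiff_const : ContDiff ℝ 1 (fun s : ℝ => (s, x)))

lemma C1.tdiff {f : ℝ → (Fin n → ℝ) → ℝ} (hf : C1 f) (x : Fin n → ℝ) :
    Differentiable ℝ (fun s => f s x) :=
  (hf.tslice x).differentiable one_ne_zero

lemma C1.hasDt {f : ℝ → (Fin n → ℝ) → ℝ} (hf : C1 f) (s : ℝ) (x : Fin n → ℝ) :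
    HasDerivAt (fun r => f r x) (Dt f s x) s :=
  (hf.tdiff x s).hasDerivAt

lemma C1.dt_eq {f : ℝ → (Fin n → ℝ) → ℝ} (hf : C1 f) (s : ℝ) (x : Fin n → ℝ) :
    Dt f s x = fderiv ℝ (fun p : ℝ × (Fin n → ℝ) => f p.1 p.2) (s, x) (1, 0) := by
  have h1 := (hf.differentiable one_ne_zero (s, x)).hasFDerivAt
  have h2 : HasDerivAt (fun r : ℝ => (r, x)) ((1 : ℝ), (0 : Fin n → ℝ)) s :=
    (hasDerivAt_id s).prodMk (hasDerivAt_const s x)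
  exact (h1.comp_hasDerivAt s h2).deriv

lemma C1.dt_cont {f : ℝ → (Fin n → ℝ) → ℝ} (hf : C1 f) :
    Continuous (fun p : ℝ × (Fin n → ℝ) => Dt f p.1 p.2) := by
  have : (fun p : ℝ × (Fin n → ℝ) => Dt f p.1 p.2) = fun p =>
      fderiv ℝ (fun p : ℝ × (Fin n → ℝ) => f p.1 p.2) p (1, 0) := by
    ext p; exact hf.dt_eq p.1 p.2
  rw [this]
  exact (hf.continuous_fderiv one_ne_zero).clm_apply continuous_const

lemma C1.dt_cont' {f : ℝ → (Fin n → ℝ) → ℝ} (hf : C1 f) (s : ℝ) : Continuous (Dt f s) :=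
  hf.dt_cont.comp (by fun_prop : Continuous (fun x : Fin n → ℝ => (s, x)))

lemma C1.dx_cont {f : ℝ → (Fin n → ℝ) → ℝ} (hf : C1 f) (k : Fin n) (s : ℝ) :
    Continuous (Dx f k s) :=
  ((hf.slice s).continuous_fderiv one_ne_zero).clm_apply continuous_const

lemma C1.mul {f g : ℝ → (Fin n → ℝ) → ℝ} (hf : C1 f) (hg : C1 g) :
    C1 (fun s x => f s x * g s x) := ContDiff.mul hf hg

lemma Dt_mul {f g : ℝ → (Fin n → ℝ) → ℝ} (hf : C1 f) (hg : C1 g) (s : ℝ) (x : Fin n → ℝ) :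
    Dt (fun s x => f s x * g s x) s x = Dt f s x * g s x + f s x * Dt g s x :=
  ((hf.hasDt s x).mul (hg.hasDt s x)).deriv

lemma Dx_mul {f g : ℝ → (Fin n → ℝ) → ℝ} (hf : C1 f) (hg : C1 g) (k : Fin n)
    (s : ℝ) (x : Fin n → ℝ) :
    Dx (fun s x => f s x * g s x) k s x = Dx f k s x * g s x + f s x * Dx g k s x := by
  unfold Dx
  rw [show ((fun s x => f s x * g s x) s) = f s * g s from rfl,
    ((hf.diff s x).hasFDerivAt.mul (hg.diff s x).hasFDerivAt).fderiv]
  simp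
  ring

lemma integrable_of_zero_out {f : (Fin n → ℝ) → ℝ} (hf : Continuous f) {R : ℝ}
    (h : ∀ x, R < ‖x‖ → f x = 0) : Integrable f := by
  apply hf.integrable_of_hasCompactSupport
  apply HasCompactSupport.intro (isCompact_closedBall (0 : Fin n → ℝ) R)
  intro x hx
  apply h
  simpa using hx

/-- Differentiation of a compactly supported weighted charge. -/
lemma hasDerivAt_compact {ρ : ℝ → (Fin n → ℝ) → ℝ} {J : Fin n → ℝ → (Fin n → ℝ) → ℝ}
    (hρ : C1 ρ) (hJ : ∀ k, C1 (J k))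
    (hcont : ∀ s x, Dt ρ s x = - ∑ k, Dx (J k) k s x)
    {w : ℝ → (Fin n → ℝ) → ℝ} (hw : C1 w) (t : ℝ)
    (hsupp : ∃ R : ℝ, ∀ s ∈ Metric.ball t 1, ∀ x, R < ‖x‖ → w s x = 0) :
    HasDerivAt (fun s => ∫ x, w s x * ρ s x)
      (∫ x, (Dt w t x * ρ t x + ∑ k, Dx w k t x * J k t x)) t := by
  obtain ⟨R, hR⟩ := hsupp
  have ht : t ∈ Metric.ball t 1 := Metric.mem_ball_self one_pos
  have hF := hw.mul hρ
  have hnt : ∀ s ∈ Metric.ball t 1, ∀ x, R < ‖x‖ → Dt w s x = 0 := by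
    intro s hs x hx
    have : (fun r => w r x) =ᶠ[𝓝 s] fun _ => 0 := by
      filter_upwards [Metric.isOpen_ball.mem_nhds hs] with r hr using hR r hr x hx
    unfold Dt
    rw [this.deriv_eq]; simp
  have hnx : ∀ k x, R < ‖x‖ → Dx w k t x = 0 := by
    intro k x hx
    have : w t =ᶠ[𝓝 x] fun _ => 0 := by
      filter_upwards [(isOpen_lt continuous_const continuous_norm).mem_nhds hx] with y hy
        using hR t ht y hy
    unfold Dx
    rw [this.fderiv_eq]; simp
  have hnF : ∀ s ∈ Metric.ball t 1, ∀ x, R < ‖x‖ → Dt (fun s x => w s x * ρ s x) s x = 0 := by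
    intro s hs x hx
    rw [Dt_mul hw hρ, hnt s hs x hx, hR s hs x hx]; simp
  obtain ⟨C, hC⟩ := ((isCompact_closedBall t 1).prod
    (isCompact_closedBall (0 : Fin n → ℝ) R)).exists_bound_of_continuousOn hF.dt_cont.continuousOn
  have key := hasDerivAt_integral_of_dominated_loc_of_deriv_le (μ := volume)
    (F := fun s x => w s x * ρ s x) (F' := Dt (fun s x => w s x * ρ s x)) (x₀ := t)
    (bound := (Metric.closedBall (0 : Fin n → ℝ) R).indicator fun _ => C)
    (Metric.ball_mem_nhds t one_pos)
    (Eventually.of_forall fun s => (hF.cont s).aestronglyMeasurable)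
    (integrable_of_zero_out (hF.cont t) (R := R) fun x hx => by simp [hR t ht x hx])
    ((hF.dt_cont' t).aestronglyMeasurable)
    (Eventually.of_forall fun x s hs => by
      by_cases hx : x ∈ Metric.closedBall (0 : Fin n → ℝ) R
      · rw [Set.indicator_of_mem hx]
        exact hC (s, x) ⟨Metric.ball_subset_closedBall hs, hx⟩
      · rw [Set.indicator_of_notMem hx, hnF s hs x (by simpa using hx)]; simp)
    ((integrable_indicator_iff Metric.isClosed_closedBall.measurableSet).2
      (continuous_const.continuousOn.integrableOn_compact (isCompact_closedBall _ _)))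
    (Eventually.of_forall fun x s hs => hF.hasDt s x)
  refine key.2.congr_deriv ?_
  have hI1 : ∀ k, Integrable (fun x => Dx w k t x * J k t x) := fun k =>
    integrable_of_zero_out (R := R) ((hw.dx_cont k t).mul ((hJ k).cont t))
      fun x hx => by simp [hnx k x hx]
  have hI2 : ∀ k, Integrable (fun x => w t x * Dx (J k) k t x) := fun k =>
    integrable_of_zero_out (R := R) ((hw.cont t).mul ((hJ k).dx_cont k t))
      fun x hx => by simp [hR t ht x hx]
  have hI3 : ∀ k, Integrable (fun x => w t x * J k t x) := fun k =>
    integrable_of_zero_out (R := R) ((hw.cont t).mul ((hJ k).cont t))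
      fun x hx => by simp [hR t ht x hx]
  have hI4 : Integrable (fun x => Dt w t x * ρ t x) :=
    integrable_of_zero_out (R := R) ((hw.dt_cont' t).mul (hρ.cont t))
      fun x hx => by simp [hnt t ht x hx]
  have ibp : ∀ k, ∫ x, w t x * Dx (J k) k t x = - ∫ x, Dx w k t x * J k t x := fun k =>
    integral_mul_fderiv_eq_neg_fderiv_mul_of_integrable (hI1 k) (hI2 k) (hI3 k)
      (fun x _ => hw.diff t x) (fun x _ => (hJ k).diff t x)
  have e1 : ∀ x, Dt (fun s x => w s x * ρ s x) t x
      = Dt w t x * ρ t x - ∑ k, w t x * Dx (J k) k t x := by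
    intro x
    rw [Dt_mul hw hρ, hcont, ← Finset.mul_sum]; ring
  simp_rw [e1]
  rw [integral_sub hI4 (integrable_finsetSum _ fun k _ => hI2 k),
    integral_add hI4 (integrable_finsetSum _ fun k _ => hI1 k),
    integral_finsetSum _ (fun k _ => hI2 k), integral_finsetSum _ (fun k _ => hI1 k)]
  simp_rw [ibp]
  simp

/-- One-dimensional cutoff. -/
noncomputable def chi (r : ℝ) : ℝ := Real.smoothTransition (2 - r)

lemma chi_contDiff : ContDiff ℝ 1 chi :=
  (Real.smoothTransition.contDiff (n := 1)).comp (contDiff_const.sub contDiff_id)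

lemma chi_nonneg (r : ℝ) : 0 ≤ chi r := Real.smoothTransition.nonneg _

lemma chi_le_one (r : ℝ) : chi r ≤ 1 := Real.smoothTransition.le_one _

lemma chi_one {r : ℝ} (h : r ≤ 1) : chi r = 1 :=
  Real.smoothTransition.one_of_one_le (by linarith)

lemma chi_zero {r : ℝ} (h : 2 ≤ r) : chi r = 0 :=
  Real.smoothTransition.zero_of_nonpos (by linarith)

lemma chi_antitone : Antitone chi := fun a b h =>
  Real.smoothTransition.monotone (by linarith)

lemma chi_hasDeriv (r : ℝ) : HasDerivAt chi (deriv chi r) r :=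
  (chi_contDiff.differentiable one_ne_zero r).hasDerivAt

lemma chi_deriv_nonpos (r : ℝ) : deriv chi r ≤ 0 := chi_antitone.deriv_nonpos

lemma chi_deriv_bound : ∃ C, 0 ≤ C ∧ ∀ r, |deriv chi r| ≤ C := by
  obtain ⟨C, hC⟩ := (isCompact_Icc (a := (1 : ℝ)) (b := 2)).exists_bound_of_continuousOn
    (chi_contDiff.continuous_deriv le_rfl).continuousOn
  refine ⟨|C|, abs_nonneg _, fun r => ?_⟩
  by_cases h1 : r < 1
  · have : chi =ᶠ[𝓝 r] fun _ => 1 := by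
      filter_upwards [Iio_mem_nhds h1] with y hy using chi_one (le_of_lt hy)
    rw [this.deriv_eq]; simp
  · by_cases h2 : 2 < r
    · have : chi =ᶠ[𝓝 r] fun _ => 0 := by
        filter_upwards [Ioi_mem_nhds h2] with y hy using chi_zero (le_of_lt hy)
      rw [this.deriv_eq]; simp
    · exact (hC r ⟨by linarith, by linarith⟩).trans (le_abs_self C)

/-- Derivative of a separated sum in a coordinate direction. -/
lemma hasFDerivAt_sum_coord {h h' : ℝ → ℝ} (hh : ∀ r, HasDerivAt h (h' r) r) (x : Fin n → ℝ) :
    HasFDerivAt (fun y : Fin n → ℝ => ∑ j, h (y j))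
      (∑ j, h' (x j) • ContinuousLinearMap.proj (R := ℝ) (φ := fun _ : Fin n => ℝ) j) x := by
  apply HasFDerivAt.fun_sum
  intro j _
  exact (hh (x j)).comp_hasFDerivAt x (hasFDerivAt_apply (𝕜 := ℝ) j x)

lemma sum_coord_single {a : Fin n → ℝ} (k : Fin n) :
    (∑ j, a j • ContinuousLinearMap.proj (R := ℝ) (φ := fun _ : Fin n => ℝ) j)
      (Pi.single k 1) = a k := by
  simp [Pi.single_apply]

/-- Smooth comparison with the norm. -/
noncomputable def gg (x : Fin n → ℝ) : ℝ := ∑ j, √(1 + x j ^ 2)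

/-- its derivative -/
noncomputable def dd (r : ℝ) : ℝ := r / √(1 + r ^ 2)

lemma dd_abs (r : ℝ) : |dd r| ≤ 1 := by
  unfold dd
  have hp : 0 < √(1 + r ^ 2) := Real.sqrt_pos.2 (by positivity)
  rw [abs_div, abs_of_pos hp, div_le_one hp]
  exact Real.abs_le_sqrt (by linarith)

lemma hasDeriv_sq (r : ℝ) : HasDerivAt (fun r : ℝ => √(1 + r ^ 2)) (dd r) r := by
  have h : HasDerivAt (fun r : ℝ => 1 + r ^ 2) (2 * r) r := by
    simpa using (hasDerivAt_pow 2 r).const_add 1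
  refine (h.sqrt (by positivity)).congr_deriv ?_
  unfold dd
  rw [mul_div_mul_left _ _ two_ne_zero]

lemma gg_contDiff : ContDiff ℝ 1 (gg (n := n)) := by
  unfold gg
  apply ContDiff.sum
  intro j _
  apply ContDiff.sqrt
  · fun_prop
  · intro x; positivity

lemma norm_le_gg (x : Fin n → ℝ) : ‖x‖ ≤ gg x := by
  have h0 : 0 ≤ gg x := Finset.sum_nonneg fun j _ => Real.sqrt_nonneg _
  rw [pi_norm_le_iff_of_nonneg h0]
  intro j
  have h1 : |x j| ≤ √(1 + x j ^ 2) := Real.abs_le_sqrt (by linarith)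
  exact h1.trans (Finset.single_le_sum (f := fun j => √(1 + x j ^ 2))
    (fun j _ => Real.sqrt_nonneg _) (Finset.mem_univ j))

/-- Moving cutoff. -/
noncomputable def cut (c t₀ R : ℝ) (s : ℝ) (x : Fin n → ℝ) : ℝ :=
  chi ((gg x + c * (s - t₀)) / R)

lemma cut_C1 (c t₀ R : ℝ) : C1 (cut (n := n) c t₀ R) := by
  unfold C1 cut
  apply chi_contDiff.comp
  have := gg_contDiff (n := n)
  fun_prop

lemma cut_Dt (c t₀ R s : ℝ) (x : Fin n → ℝ) :
    Dt (cut c t₀ R) s x = deriv chi ((gg x + c * (s - t₀)) / R) * (c / R) := by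
  have h : HasDerivAt (fun s : ℝ => (gg x + c * (s - t₀)) / R) (c / R) s := by
    have := ((((hasDerivAt_id s).sub_const t₀).const_mul c).const_add (gg x)).div_const R
    simpa using this
  exact ((chi_hasDeriv _).comp s h).deriv

lemma cut_Dx (c t₀ R s : ℝ) (k : Fin n) (x : Fin n → ℝ) :
    Dx (cut c t₀ R) k s x = deriv chi ((gg x + c * (s - t₀)) / R) * (dd (x k) / R) := by
  have h := ((hasFDerivAt_sum_coord hasDeriv_sq x).add_const (c * (s - t₀))).mul_const R⁻¹
  have h2 := (chi_hasDeriv ((gg x + c * (s - t₀)) * R⁻¹)).comp_hasFDerivAt x h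
  unfold Dx
  have h3 : cut c t₀ R s = chi ∘ fun y : Fin n → ℝ => (∑ j, √(1 + y j ^ 2) + c * (s - t₀)) * R⁻¹ := by
    ext y; simp [cut, gg, div_eq_mul_inv]
  rw [h3, h2.fderiv]
  simp only [_root_.smul_apply, sum_coord_single, smul_eq_mul, div_eq_mul_inv]
  ring

lemma cut_supp (c t₀ : ℝ) {R : ℝ} (hR : 0 < R) (t : ℝ) :
    ∃ R' : ℝ, ∀ s ∈ Metric.ball t 1, ∀ x : Fin n → ℝ, R' < ‖x‖ → cut c t₀ R s x = 0 := by
  refine ⟨2 * R + |c| * (|t - t₀| + 1), fun s hs x hx => chi_zero ?_⟩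
  rw [le_div_iff₀ hR]
  have h1 : |s - t| < 1 := by simpa [Real.dist_eq] using hs
  have h2 : |s - t₀| ≤ |t - t₀| + 1 := by
    have := abs_add_le (s - t) (t - t₀)
    rw [sub_add_sub_cancel] at this
    linarith
  have h3 : |c * (s - t₀)| ≤ |c| * (|t - t₀| + 1) := by
    rw [abs_mul]; gcongr
  have := norm_le_gg x
  have := neg_abs_le (c * (s - t₀))
  linarith

lemma cut_abs (c t₀ R s : ℝ) (x : Fin n → ℝ) : |cut c t₀ R s x| ≤ 1 :=
  abs_le.2 ⟨by linarith [chi_nonneg ((gg x + c * (s - t₀)) / R), show cut c t₀ R s x = chi ((gg x + c * (s - t₀)) / R) from rfl], chi_le_one _⟩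

lemma integrable_bdd_mul {u v : (Fin n → ℝ) → ℝ} (hu : Integrable u) (hv : Continuous v)
    {C : ℝ} (hC : ∀ x, |v x| ≤ C) : Integrable (fun x => v x * u x) :=
  hu.bdd_mul hv.aestronglyMeasurable (Eventually.of_forall hC)

lemma cut_tendsto (c t₀ s : ℝ) {u : (Fin n → ℝ) → ℝ} (hu : Integrable u) :
    Tendsto (fun m : ℕ => ∫ x, cut c t₀ ((m : ℝ) + 1) s x * u x) atTop (𝓝 (∫ x, u x)) := by
  apply tendsto_integral_of_dominated_convergence (fun x => |u x|)
  · intro m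
    exact ((cut_C1 c t₀ _).cont s).aestronglyMeasurable.mul hu.aestronglyMeasurable
  · exact hu.abs
  · intro m
    refine Eventually.of_forall fun x => ?_
    rw [Real.norm_eq_abs, abs_mul]
    exact mul_le_of_le_one_left (abs_nonneg _) (cut_abs _ _ _ _ _)
  · refine Eventually.of_forall fun x => ?_
    apply tendsto_const_nhds.congr'
    obtain ⟨M, hM⟩ := exists_nat_ge (gg x + c * (s - t₀))
    filter_upwards [eventually_ge_atTop M] with m hm
    have : cut c t₀ ((m : ℝ) + 1) s x = 1 := by
      apply chi_one
      have : (M : ℝ) ≤ m := by exact_mod_cast hm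
      rw [div_le_one (by positivity)]
      linarith
    rw [this, one_mul]

lemma mass_le {ρ : ℝ → (Fin n → ℝ) → ℝ} {J : Fin n → ℝ → (Fin n → ℝ) → ℝ}
    (hρ : C1 ρ) (hJ : ∀ k, C1 (J k))
    (hcont : ∀ s x, Dt ρ s x = - ∑ k, Dx (J k) k s x)
    (hJρ : ∀ k s x, |J k s x| ≤ ρ s x)
    (hrhoint : ∀ s, Integrable (ρ s)) (s t : ℝ) : ∫ x, ρ s x ≤ ∫ x, ρ t x := by
  have hder : ∀ (c R r : ℝ), 0 < R → HasDerivAt (fun r => ∫ x, cut c t R r x * ρ r x)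
      (∫ x, deriv chi ((gg x + c * (r - t)) / R) / R * (c * ρ r x + ∑ k, dd (x k) * J k r x)) r := by
    intro c R r hR
    refine (hasDerivAt_compact hρ hJ hcont (cut_C1 c t R) r (cut_supp c t hR r)).congr_deriv ?_
    congr 1
    ext x
    simp_rw [cut_Dt, cut_Dx, mul_add, Finset.mul_sum]
    congr 1
    · ring
    · exact Finset.sum_congr rfl fun k _ => by ring
  have hsum : ∀ r x, |∑ k, dd (x k) * J k r x| ≤ n * ρ r x := by
    intro r x
    refine (Finset.abs_sum_le_sum_abs _ _).trans ?_
    refine (Finset.sum_le_sum (g := fun _ => ρ r x) fun k _ => ?_).trans (by simp)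
    rw [abs_mul]
    exact (mul_le_of_le_one_left (abs_nonneg _) (dd_abs _)).trans (hJρ k r x)
  have hfin : ∀ c : ℝ, (∀ R : ℝ, 0 < R →
      ∫ x, cut c t R s x * ρ s x ≤ ∫ x, cut c t R t x * ρ t x) → ∫ x, ρ s x ≤ ∫ x, ρ t x := by
    intro c h
    exact le_of_tendsto_of_tendsto' (cut_tendsto c t s (hrhoint s)) (cut_tendsto c t t (hrhoint t))
      fun m => h _ (by positivity)
  rcases le_total t s with hts | hts
  · apply hfin n
    intro R hR
    refine antitone_of_deriv_nonpos (f := fun r => ∫ x, cut n t R r x * ρ r x)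
      (fun r => (hder n R r hR).differentiableAt) (fun r => ?_) hts
    rw [(hder n R r hR).deriv]
    apply integral_nonpos
    intro x
    apply mul_nonpos_of_nonpos_of_nonneg
    · exact div_nonpos_of_nonpos_of_nonneg (chi_deriv_nonpos _) hR.le
    · linarith [(abs_le.1 (hsum r x)).1]
  · apply hfin (-n)
    intro R hR
    refine monotone_of_deriv_nonneg (f := fun r => ∫ x, cut (-n) t R r x * ρ r x)
      (fun r => (hder (-n) R r hR).differentiableAt) (fun r => ?_) hts
    rw [(hder (-n) R r hR).deriv]
    apply integral_nonneg
    intro x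
    apply mul_nonneg_of_nonpos_of_nonpos
    · exact div_nonpos_of_nonpos_of_nonneg (chi_deriv_nonpos _) hR.le
    · linarith [(abs_le.1 (hsum r x)).2]

/-- Differentiation of a bounded-weight charge, without any local uniformity in time. -/
lemma hasDerivAt_weighted {ρ : ℝ → (Fin n → ℝ) → ℝ} {J : Fin n → ℝ → (Fin n → ℝ) → ℝ}
    (hρ : C1 ρ) (hJ : ∀ k, C1 (J k))
    (hcont : ∀ s x, Dt ρ s x = - ∑ k, Dx (J k) k s x)
    (hρ0 : ∀ s x, 0 ≤ ρ s x) (hJρ : ∀ k s x, |J k s x| ≤ ρ s x)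
    (hrhoint : ∀ s, Integrable (ρ s))
    {w : ℝ → (Fin n → ℝ) → ℝ} (hw : C1 w) {C : ℝ} (hC : 0 ≤ C) (hw0 : ∀ s x, |w s x| ≤ C)
    (hwt : ∀ s x, |Dt w s x| ≤ C) (hwx : ∀ k s x, |Dx w k s x| ≤ C) (t : ℝ) :
    HasDerivAt (fun s => ∫ x, w s x * ρ s x)
      (∫ x, (Dt w t x * ρ t x + ∑ k, Dx w k t x * J k t x)) t := by
  obtain ⟨C', hC'0, hC'⟩ := chi_deriv_bound
  set M := ∫ x, ρ t x with hM
  have hmass : ∀ s, ∫ x, ρ s x = M := fun s =>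
    le_antisymm (mass_le hρ hJ hcont hJρ hrhoint s t) (mass_le hρ hJ hcont hJρ hrhoint t s)
  have hM0 : 0 ≤ M := integral_nonneg (hρ0 t)
  have hJint : ∀ k s, Integrable (J k s) := fun k s =>
    (hrhoint s).mono' ((hJ k).cont s).aestronglyMeasurable (Eventually.of_forall (hJρ k s))
  have hterm : ∀ (a : ℝ) (k : Fin n) (s : ℝ) (x : Fin n → ℝ) (D : ℝ), |a| ≤ D →
      |a * J k s x| ≤ D * ρ s x := by
    intro a k s x D h
    rw [abs_mul]
    exact mul_le_mul h (hJρ k s x) (abs_nonneg _) ((abs_nonneg _).trans h)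
  have hsumterm : ∀ (a : Fin n → ℝ) (s : ℝ) (x : Fin n → ℝ) (D : ℝ), (∀ k, |a k| ≤ D) →
      |∑ k, a k * J k s x| ≤ n * (D * ρ s x) := by
    intro a s x D h
    refine (Finset.abs_sum_le_sum_abs _ _).trans ?_
    exact (Finset.sum_le_sum (g := fun _ => D * ρ s x) fun k _ =>
      hterm (a k) k s x D (h k)).trans (by simp)
  let K : ℕ → ℝ → (Fin n → ℝ) → ℝ := fun m => cut 0 0 ((m : ℝ) + 1)
  have hK : ∀ m, C1 (K m) := fun m => cut_C1 _ _ _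
  have hK0 : ∀ m s x, 0 ≤ K m s x := fun m s x => chi_nonneg _
  have hK1 : ∀ m s x, K m s x ≤ 1 := fun m s x => chi_le_one _
  have hKt : ∀ m s x, Dt (K m) s x = 0 := fun m s x => by simp [K, cut_Dt]
  have hKx : ∀ m k s x, |Dx (K m) k s x| ≤ C' / ((m : ℝ) + 1) := fun m k s x => by
    simp only [K, cut_Dx]
    have hp : (0 : ℝ) < (m : ℝ) + 1 := by positivity
    rw [abs_mul, abs_div, abs_of_pos hp, div_eq_mul_inv C', div_eq_mul_inv]
    have := mul_le_of_le_one_left (inv_nonneg.2 hp.le) (dd_abs (x k))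
    exact mul_le_mul (hC' _) this (by positivity) hC'0
  have hMm : ∀ (m : ℕ) (s : ℝ), HasDerivAt (fun s => ∫ x, K m s x * ρ s x)
      (∫ x, ∑ k, Dx (K m) k s x * J k s x) s := by
    intro m s
    refine (hasDerivAt_compact hρ hJ hcont (hK m) s (cut_supp 0 0 (by positivity) s)).congr_deriv ?_
    simp [hKt]
  have hMmb : ∀ (m : ℕ) (s : ℝ), ‖∫ x, ∑ k, Dx (K m) k s x * J k s x‖
      ≤ n * (C' / ((m : ℝ) + 1) * M) := by
    intro m s
    calc _ ≤ ∫ x, n * (C' / ((m : ℝ) + 1) * ρ s x) :=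
          norm_integral_le_of_norm_le (((hrhoint s).const_mul _).const_mul _)
            (Eventually.of_forall fun x => hsumterm _ s x _ fun k => hKx m k s x)
      _ = _ := by rw [integral_const_mul, integral_const_mul, hmass]
  have hMdiff : ∀ (m : ℕ) (s : ℝ), |(∫ x, K m s x * ρ s x) - ∫ x, K m t x * ρ t x|
      ≤ n * (C' / ((m : ℝ) + 1) * M) * |s - t| := by
    intro m s
    exact convex_univ.norm_image_sub_le_of_norm_hasDerivWithin_le
      (fun r _ => (hMm m r).hasDerivWithinAt) (fun r _ => hMmb m r) (Set.mem_univ t)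
      (Set.mem_univ s)
  have hWd : ∀ (m : ℕ) (s : ℝ), HasDerivAt (fun s => ∫ x, (K m s x * w s x) * ρ s x)
      (∫ x, (K m s x * (Dt w s x * ρ s x + ∑ k, Dx w k s x * J k s x)
        + ∑ k, (Dx (K m) k s x * w s x) * J k s x)) s := by
    intro m s
    refine (hasDerivAt_compact hρ hJ hcont ((hK m).mul hw) s ?_).congr_deriv ?_
    · obtain ⟨R', hR'⟩ := cut_supp (n := n) 0 0 (R := (m : ℝ) + 1) (by positivity) s
      exact ⟨R', fun r hr x hx => by simp [K, hR' r hr x hx]⟩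
    · congr 1
      ext x
      simp_rw [Dt_mul (hK m) hw, Dx_mul (hK m) hw, hKt, mul_add, Finset.mul_sum, add_mul,
        Finset.sum_add_distrib, zero_mul, zero_add, mul_assoc]
      ring
  let e : ℕ → ℝ := fun m => (n + 1) * C * (M - (∫ x, K m t x * ρ t x)
    + n * (C' / ((m : ℝ) + 1) * M)) + n * (C' / ((m : ℝ) + 1) * C * M)
  have he : Tendsto e atTop (𝓝 0) := by
    have h1 : Tendsto (fun m : ℕ => ∫ x, K m t x * ρ t x) atTop (𝓝 M) := cut_tendsto 0 0 t (hrhoint t)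
    have h2 : Tendsto (fun m : ℕ => C' / ((m : ℝ) + 1)) atTop (𝓝 0) := by
      have := tendsto_one_div_add_atTop_nhds_zero_nat (𝕜 := ℝ) |>.const_mul C'
      simpa [div_eq_mul_inv] using this
    have h3 := (((h1.const_sub M).add ((h2.mul_const M).const_mul (n : ℝ))).const_mul
      (((n : ℝ) + 1) * C)).add (((h2.mul_const C).mul_const M).const_mul (n : ℝ))
    simpa [e] using h3
  have hA : ∀ s x, |Dt w s x * ρ s x + ∑ k, Dx w k s x * J k s x| ≤ (n + 1) * C * ρ s x := by
    intro s x
    have h1 : |Dt w s x * ρ s x| ≤ C * ρ s x := by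
      rw [abs_mul, abs_of_nonneg (hρ0 s x)]
      exact mul_le_mul_of_nonneg_right (hwt s x) (hρ0 s x)
    have h2 := hsumterm (fun k => Dx w k s x) s x C fun k => hwx k s x
    refine (abs_add_le _ _).trans ?_
    linarith
  have hAint : ∀ s, Integrable (fun x => Dt w s x * ρ s x + ∑ k, Dx w k s x * J k s x) := by
    intro s
    refine (integrable_bdd_mul (hrhoint s) (hw.dt_cont' s) (hwt s)).add
      (integrable_finsetSum _ fun k _ => integrable_bdd_mul (hJint k s) (hw.dx_cont k s) (hwx k s))
  have hKAint : ∀ m s, Integrable (fun x => K m s x *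
      (Dt w s x * ρ s x + ∑ k, Dx w k s x * J k s x)) := fun m s =>
    integrable_bdd_mul (hAint s) ((hK m).cont s) (cut_abs _ _ _ s)
  have hKρint : ∀ m s, Integrable (fun x => K m s x * ρ s x) := fun m s =>
    integrable_bdd_mul (hrhoint s) ((hK m).cont s) (cut_abs _ _ _ s)
  have hKw : ∀ m k s x, |Dx (K m) k s x * w s x| ≤ C' / ((m : ℝ) + 1) * C := by
    intro m k s x
    rw [abs_mul]
    exact mul_le_mul (hKx m k s x) (hw0 s x) (abs_nonneg _) (by positivity)
  have hBint : ∀ m s, Integrable (fun x => ∑ k, (Dx (K m) k s x * w s x) * J k s x) := fun m s =>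
    integrable_finsetSum _ fun k _ => integrable_bdd_mul (hJint k s)
      (((hK m).dx_cont k s).mul (hw.cont s)) (hKw m k s)
  refine hasDerivAt_of_tendstoUniformlyOn (l := atTop) (s := Metric.ball t 1) Metric.isOpen_ball
    (f := fun m s => ∫ x, (K m s x * w s x) * ρ s x)
    (g' := fun s => ∫ x, (Dt w s x * ρ s x + ∑ k, Dx w k s x * J k s x))
    (f' := fun m s => ∫ x, (K m s x * (Dt w s x * ρ s x + ∑ k, Dx w k s x * J k s x)
        + ∑ k, (Dx (K m) k s x * w s x) * J k s x)) ?_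
    (Eventually.of_forall fun m s _ => hWd m s) ?_ (Metric.mem_ball_self one_pos)
  · rw [Metric.tendstoUniformlyOn_iff]
    intro ε hε
    filter_upwards [he.eventually (gt_mem_nhds hε)] with m hm s hs
    refine lt_of_le_of_lt ?_ hm
    have hKAB : Integrable (fun x => K m s x * (Dt w s x * ρ s x + ∑ k, Dx w k s x * J k s x)
        + ∑ k, (Dx (K m) k s x * w s x) * J k s x) := (hKAint m s).add (hBint m s)
    rw [dist_comm, Real.dist_eq, ← integral_sub hKAB (hAint s)]
    have hs' : |s - t| ≤ 1 := by
      have : |s - t| < 1 := by simpa [Real.dist_eq] using hs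
      exact this.le
    have hb : ∀ x, |K m s x * (Dt w s x * ρ s x + ∑ k, Dx w k s x * J k s x)
        + ∑ k, (Dx (K m) k s x * w s x) * J k s x
        - (Dt w s x * ρ s x + ∑ k, Dx w k s x * J k s x)|
        ≤ (n + 1) * C * (ρ s x - K m s x * ρ s x) + n * (C' / ((m : ℝ) + 1) * C * ρ s x) := by
      intro x
      have h1 := hA s x
      have h2 := hsumterm (fun k => Dx (K m) k s x * w s x) s x _ fun k => hKw m k s x
      set A := Dt w s x * ρ s x + ∑ k, Dx w k s x * J k s x
      set B := ∑ k, (Dx (K m) k s x * w s x) * J k s x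
      have h3 : K m s x * A + B - A = -((1 - K m s x) * A) + B := by ring
      rw [h3]
      refine (abs_add_le _ _).trans (add_le_add ?_ h2)
      rw [abs_neg, abs_mul, abs_of_nonneg (by linarith [hK1 m s x])]
      calc _ ≤ (1 - K m s x) * ((n + 1) * C * ρ s x) :=
            mul_le_mul_of_nonneg_left h1 (by linarith [hK1 m s x])
        _ = _ := by ring
    have hi1 : Integrable (fun x => (n + 1) * C * (ρ s x - K m s x * ρ s x)) :=
      ((hrhoint s).sub (hKρint m s)).const_mul _
    have hi2 : Integrable (fun x => n * (C' / ((m : ℝ) + 1) * C * ρ s x)) :=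
      ((hrhoint s).const_mul _).const_mul _
    rw [← Real.norm_eq_abs]
    refine le_trans (norm_integral_le_of_norm_le (hi1.add hi2) (Eventually.of_forall ?_)) ?_
    · exact fun x => hb x
    have h5 : ∫ x, ((n + 1) * C * (ρ s x - K m s x * ρ s x)
        + n * (C' / ((m : ℝ) + 1) * C * ρ s x))
        = (n + 1) * C * (M - ∫ x, K m s x * ρ s x) + n * (C' / ((m : ℝ) + 1) * C * M) := by
      rw [integral_add hi1 hi2, integral_const_mul, integral_sub (hrhoint s) (hKρint m s),
        integral_const_mul, integral_const_mul, hmass]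
    refine (le_of_eq h5).trans ?_
    have h6 := (abs_le.1 (hMdiff m s)).1
    have h7 : n * (C' / ((m : ℝ) + 1) * M) * |s - t| ≤ n * (C' / ((m : ℝ) + 1) * M) :=
      mul_le_of_le_one_right (by positivity) hs'
    have h8 : M - (∫ x, K m s x * ρ s x) ≤ M - (∫ x, K m t x * ρ t x)
        + n * (C' / ((m : ℝ) + 1) * M) := by linarith
    exact add_le_add (mul_le_mul_of_nonneg_left h8 (by positivity)) le_rfl
  · intro s _
    have := cut_tendsto 0 0 s (integrable_bdd_mul (hrhoint s) (hw.cont s) (hw0 s))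
    simpa only [K, mul_assoc] using this

variable {N : ℕ}

/-- The quadratic form `Re u† A u`. -/
noncomputable def qf (A : Matrix (Fin N) (Fin N) ℂ) (u : Fin N → ℂ) : ℝ := (star u ⬝ᵥ (A *ᵥ u)).re

lemma qf_contDiff (A : Matrix (Fin N) (Fin N) ℂ) : ContDiff ℝ 1 (qf A) := by
  have h : qf A = fun u : Fin N → ℂ =>
      ∑ a, ∑ c, (Complex.conjCLE (u a) * (A a c * u c)).re := by
    ext u
    simp [qf, dotProduct, mulVec, Finset.mul_sum]
  rw [h]
  refine ContDiff.sum fun a _ => ContDiff.sum fun c _ => ?_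
  refine Complex.reCLM.contDiff.comp (ContDiff.mul ?_ ?_)
  · exact Complex.conjCLE.contDiff.comp (contDiff_apply ℝ ℂ a)
  · exact contDiff_const.mul (contDiff_apply ℝ ℂ c)

lemma qf_one (u : Fin N → ℂ) : qf 1 u = ∑ k, ‖u k‖ ^ 2 := by
  simp only [qf, one_mulVec, dotProduct, Complex.re_sum, Pi.star_apply]
  refine Finset.sum_congr rfl fun k _ => ?_
  rw [← Complex.normSq_eq_norm_sq, Complex.normSq_apply]
  simp

lemma re_herm {A : Matrix (Fin N) (Fin N) ℂ} (hA : A.IsHermitian) (u v : Fin N → ℂ) :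
    (star v ⬝ᵥ (A *ᵥ u)).re = (star u ⬝ᵥ (A *ᵥ v)).re := by
  rw [star_dotProduct, star_mulVec, hA.eq, ← dotProduct_mulVec]
  simp

lemma qf_hasDeriv {A : Matrix (Fin N) (Fin N) ℂ} (hA : A.IsHermitian) {u : ℝ → Fin N → ℂ}
    {u' : Fin N → ℂ} {r : ℝ} (hu : HasDerivAt u u' r) :
    HasDerivAt (fun r => qf A (u r)) (2 * (star (u r) ⬝ᵥ (A *ᵥ u')).re) r := by
  have hc : ∀ a, HasDerivAt (fun r => u r a) (u' a) r := hasDerivAt_pi.1 hu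
  have h1 : HasDerivAt (fun r => star (u r) ⬝ᵥ (A *ᵥ (u r)))
      (star u' ⬝ᵥ (A *ᵥ (u r)) + star (u r) ⬝ᵥ (A *ᵥ u')) r := by
    simp only [dotProduct, mulVec, ← Finset.sum_add_distrib, Pi.star_apply]
    refine HasDerivAt.fun_sum fun a _ => ?_
    exact (hc a).star.mul (HasDerivAt.fun_sum fun c _ => (hc c).const_mul (A a c))
  have h2 : HasDerivAt (fun r => qf A (u r))
      (star u' ⬝ᵥ (A *ᵥ (u r)) + star (u r) ⬝ᵥ (A *ᵥ u')).re r :=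
    Complex.reCLM.hasFDerivAt.comp_hasDerivAt r h1
  refine h2.congr_deriv ?_
  rw [Complex.add_re, re_herm hA]
  ring

lemma qf_abs_le {A : Matrix (Fin N) (Fin N) ℂ} (hA : A.IsHermitian) (hA2 : A * A = 1)
    (u : Fin N → ℂ) : |qf A u| ≤ qf 1 u := by
  have hpos : ∀ v : Fin N → ℂ, 0 ≤ qf 1 v := fun v => by
    rw [qf_one]; exact Finset.sum_nonneg fun k _ => by positivity
  have hAA : (star (A *ᵥ u) ⬝ᵥ (A *ᵥ u)) = star u ⬝ᵥ u := by
    rw [star_mulVec, hA.eq, ← dotProduct_mulVec, mulVec_mulVec, hA2, one_mulVec]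
  have hAu : (star (A *ᵥ u) ⬝ᵥ u) = star u ⬝ᵥ (A *ᵥ u) := by
    rw [star_mulVec, hA.eq, ← dotProduct_mulVec]
  have h1 := hpos (u + A *ᵥ u)
  have h2 := hpos (u - A *ᵥ u)
  simp only [qf, one_mulVec, star_add, star_sub, add_dotProduct, sub_dotProduct, dotProduct_add,
    dotProduct_sub, hAA, hAu, Complex.add_re, Complex.sub_re] at h1 h2 ⊢
  rw [abs_le]
  constructor <;> linarith

lemma cosh_ne (r : ℝ) : Real.cosh r ≠ 0 := (Real.cosh_pos r).ne'

lemma hasDeriv_tanh (r : ℝ) : HasDerivAt Real.tanh ((1 / Real.cosh r) ^ 2) r := by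
  have h := (Real.hasDerivAt_sinh r).div (Real.hasDerivAt_cosh r) (cosh_ne r)
  have e : Real.tanh = Real.sinh / Real.cosh := by ext x; exact Real.tanh_eq_sinh_div_cosh x
  rw [e]
  refine h.congr_deriv ?_
  rw [one_div, inv_pow, ← one_div]
  congr 1
  nlinarith [Real.cosh_sq r]

lemma tanh_contDiff : ContDiff ℝ 1 Real.tanh := by
  have e : Real.tanh = fun x => Real.sinh x / Real.cosh x := by
    ext x; exact Real.tanh_eq_sinh_div_cosh x
  rw [e]
  exact Real.contDiff_sinh.div Real.contDiff_cosh cosh_ne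

lemma sech_nonneg (r : ℝ) : 0 ≤ (1 / Real.cosh r) ^ 2 := by positivity

lemma sech_le (r : ℝ) : (1 / Real.cosh r) ^ 2 ≤ 1 := by
  have := Real.one_le_cosh r
  have h : 1 / Real.cosh r ≤ 1 := by rw [div_le_one (by linarith)]; exact this
  exact pow_le_one₀ (by positivity) h

/-- The weight. -/
noncomputable def wt (b lam : ℝ) (s : ℝ) (x : Fin n → ℝ) : ℝ :=
  ∑ j : Fin n, Real.tanh ((x j + s * (-(1 + b))) / lam)

lemma wt_C1 (b lam : ℝ) : C1 (wt (n := n) b lam) := by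
  unfold C1 wt
  refine ContDiff.sum fun j _ => tanh_contDiff.comp ?_
  fun_prop

lemma wt_Dt (b lam s : ℝ) (x : Fin n → ℝ) :
    Dt (wt b lam) s x = ∑ j, (1 / Real.cosh ((x j - (1 + b) * s) / lam)) ^ 2 * (-(1 + b) / lam) := by
  refine HasDerivAt.deriv (HasDerivAt.fun_sum fun j _ => ?_)
  have h : HasDerivAt (fun s : ℝ => (x j + s * (-(1 + b))) / lam) (-(1 + b) / lam) s := by
    have := (((hasDerivAt_id s).mul_const (-(1 + b))).const_add (x j)).div_const lam
    simpa using this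
  have h2 := (hasDeriv_tanh _).comp s h
  rw [show x j - (1 + b) * s = x j + s * (-(1 + b)) by ring]
  exact h2

lemma wt_Dx (b lam s : ℝ) (k : Fin n) (x : Fin n → ℝ) :
    Dx (wt b lam) k s x = (1 / Real.cosh ((x k - (1 + b) * s) / lam)) ^ 2 / lam := by
  have hh : ∀ r, HasDerivAt (fun r : ℝ => Real.tanh ((r + s * (-(1 + b))) / lam))
      ((1 / Real.cosh ((r - (1 + b) * s) / lam)) ^ 2 * (1 / lam)) r := by
    intro r
    have h : HasDerivAt (fun r : ℝ => (r + s * (-(1 + b))) / lam) (1 / lam) r :=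
      ((hasDerivAt_id r).add_const _).div_const lam
    rw [show r - (1 + b) * s = r + s * (-(1 + b)) by ring]
    exact (hasDeriv_tanh _).comp r h
  have h := (hasFDerivAt_sum_coord hh x).fderiv
  unfold Dx
  rw [show wt b lam s = fun y : Fin n → ℝ => ∑ j : Fin n, Real.tanh ((y j + s * (-(1 + b))) / lam)
    from rfl, h, sum_coord_single]
  ring

end DiracVirial

open DiracVirial in
/-- The weighted-charge inequality of Section 4 (`eq:dtI_bound`): with the weight
`ϕ(x) = Σ_j tanh x_j` translated at speed `−(1+b)` in every coordinate, the functional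
`I(t)` has derivative bounded by `−(b/λ) Σ_j ∫ sech²((x_j−(1+b)t)/λ) |ψ|²`. -/
theorem dirac_exterior_cone_virial_bound
    (n N : ℕ) (hn : 1 ≤ n) (hN : 1 ≤ N) (m : ℝ)
    (α : Fin n → Matrix (Fin N) (Fin N) ℂ) (β : Matrix (Fin N) (Fin N) ℂ)
    (hαherm : ∀ j, (α j).IsHermitian) (hβherm : β.IsHermitian)
    (hanticomm : ∀ j k : Fin n,
      α j * α k + α k * α j = if j = k then (2 : ℂ) • (1 : Matrix (Fin N) (Fin N) ℂ) else 0)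
    (hαβ : ∀ j, α j * β + β * α j = 0)
    (hβ2 : β * β = 1)
    (V : (Fin n → ℝ) → (Fin N → ℂ) → ℝ)
    (ψ : ℝ → (Fin n → ℝ) → (Fin N → ℂ))
    (hψ : ContDiff ℝ (⊤ : ℕ∞) (fun p : ℝ × (Fin n → ℝ) => ψ p.1 p.2))
    (hψS : ∀ t : ℝ, ∃ f : SchwartzMap (Fin n → ℝ) (Fin N → ℂ), ∀ x, f x = ψ t x)
    (heq : ∀ (t : ℝ) (x : Fin n → ℝ) (k : Fin N),
      Complex.I * deriv (fun s => ψ s x k) t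
        = -Complex.I *
            (∑ j : Fin n,
              ((α j) *ᵥ (fun l => fderiv ℝ (fun y => ψ t y l) x (Pi.single j 1))) k)
          + ((m + V x (ψ t x) : ℝ) : ℂ) * ((β *ᵥ ψ t x) k))
    (lam b : ℝ) (hlam : 0 < lam) (hb : 0 < b) :
    ∀ t : ℝ, ∃ d : ℝ,
      HasDerivAt
        (fun s : ℝ =>
          ∫ (x : Fin n → ℝ),
            (∑ j : Fin n, Real.tanh ((x j + s * (-(1 + b))) / lam))
              * (∑ k : Fin N, ‖ψ s x k‖ ^ 2)) d t
      ∧ d ≤ -(b / lam) *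
          ∑ j : Fin n, ∫ (x : Fin n → ℝ),
            (1 / Real.cosh ((x j - (1 + b) * t) / lam)) ^ 2
              * (∑ k : Fin N, ‖ψ t x k‖ ^ 2) := by
  intro t
  have hψ1 : ContDiff ℝ 1 (fun p : ℝ × (Fin n → ℝ) => ψ p.1 p.2) :=
    hψ.of_le (by exact_mod_cast le_top)
  have hα2 : ∀ j, α j * α j = 1 := by
    intro j
    have h := hanticomm j j
    rw [if_pos rfl, ← two_smul ℂ (α j * α j)] at h
    exact smul_right_injective _ (two_ne_zero : (2 : ℂ) ≠ 0) h
  let ρ : ℝ → (Fin n → ℝ) → ℝ := fun s x => qf 1 (ψ s x)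
  let J : Fin n → ℝ → (Fin n → ℝ) → ℝ := fun k s x => qf (α k) (ψ s x)
  have hρ : C1 ρ := (qf_contDiff 1).comp hψ1
  have hJ : ∀ k, C1 (J k) := fun k => (qf_contDiff (α k)).comp hψ1
  have hρe : ∀ s x, ρ s x = ∑ k, ‖ψ s x k‖ ^ 2 := fun s x => qf_one _
  have hρ0 : ∀ s x, 0 ≤ ρ s x := fun s x => by
    rw [hρe]; exact Finset.sum_nonneg fun k _ => by positivity
  have hJρ : ∀ k s x, |J k s x| ≤ ρ s x := fun k s x => qf_abs_le (hαherm k) (hα2 k) _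
  have hrhoint : ∀ s, Integrable (ρ s) := by
    intro s
    obtain ⟨f, hf⟩ := hψS s
    have h2 := ((f.memLp 2).integrable_norm_pow two_ne_zero).const_mul (N : ℝ)
    refine h2.mono' (hρ.cont s).aestronglyMeasurable (Filter.Eventually.of_forall fun x => ?_)
    rw [Real.norm_eq_abs, abs_of_nonneg (hρ0 s x), hρe]
    refine (Finset.sum_le_sum (g := fun _ => ‖f x‖ ^ 2) fun k _ => ?_).trans (by simp)
    rw [← hf x]
    gcongr
    exact norm_le_pi_norm (f x) k
  have hcont : ∀ s x, Dt ρ s x = - ∑ k, Dx (J k) k s x := by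
    intro s x
    have hdt : DifferentiableAt ℝ (fun r => ψ r x) s :=
      ((hψ1.comp (contDiff_id.prodMk contDiff_const : ContDiff ℝ 1 (fun s : ℝ => (s, x)))).differentiable
        one_ne_zero) s
    have hdx : DifferentiableAt ℝ (fun y => ψ s y) x :=
      ((hψ1.comp (contDiff_const.prodMk contDiff_id :
        ContDiff ℝ 1 (fun x : Fin n → ℝ => (s, x)))).differentiable one_ne_zero) x
    let T : Fin N → ℂ := fun k => deriv (fun r => ψ r x k) s
    let X : Fin n → Fin N → ℂ := fun j l => fderiv ℝ (fun y => ψ s y l) x (Pi.single j 1)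
    have hT : HasDerivAt (fun r => ψ r x) T s :=
      hasDerivAt_pi.2 fun a => ((differentiableAt_pi.1 hdt) a).hasDerivAt
    have e1 : Dt ρ s x = 2 * (star (ψ s x) ⬝ᵥ T).re := by
      have := (qf_hasDeriv (A := 1) Matrix.isHermitian_one hT).deriv
      rw [one_mulVec] at this
      exact this
    have e2 : ∀ k, Dx (J k) k s x = 2 * (star (ψ s x) ⬝ᵥ (α k *ᵥ X k)).re := by
      intro k
      have hl : HasDerivAt (fun r : ℝ => x + r • (Pi.single k 1 : Fin n → ℝ)) (Pi.single k 1) 0 := by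
        simpa using ((hasDerivAt_id (0 : ℝ)).smul_const (Pi.single k 1 : Fin n → ℝ)).const_add x
      have hx0 : x + (0 : ℝ) • (Pi.single k 1 : Fin n → ℝ) = x := by simp
      have hX : HasDerivAt (fun r : ℝ => ψ s (x + r • (Pi.single k 1 : Fin n → ℝ))) (X k) 0 := by
        refine hasDerivAt_pi.2 fun a => ?_
        have h := ((differentiableAt_pi.1 hdx) a).hasFDerivAt
        rw [← hx0] at h
        have h' := h.comp_hasDerivAt (0 : ℝ) hl
        rw [hx0] at h'
        exact h'
      have h1 := qf_hasDeriv (hαherm k) hX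
      have h2 := ((hJ k).diff s x).hasFDerivAt
      rw [← hx0] at h2
      have h3 := h2.comp_hasDerivAt (0 : ℝ) hl
      rw [hx0] at h3
      simp only [hx0] at h1
      exact h3.unique h1
    have e3 : T = -(∑ j, α j *ᵥ X j) - (Complex.I * ((m + V x (ψ s x) : ℝ) : ℂ)) • (β *ᵥ ψ s x) := by
      ext k
      have h := heq s x k
      have h' := congrArg (fun z => -Complex.I * z) h
      simp only [← mul_assoc, neg_mul, mul_add, mul_neg, Complex.I_mul_I, neg_neg, one_mul] at h'
      simp only [Pi.sub_apply, Pi.neg_apply, Finset.sum_apply, Pi.smul_apply, smul_eq_mul]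
      refine h'.trans ?_
      ring
    have e4 : (star (ψ s x) ⬝ᵥ (β *ᵥ ψ s x)).im = 0 :=
      hβherm.im_star_dotProduct_mulVec_self (ψ s x)
    rw [e1, e3]
    simp_rw [e2]
    rw [dotProduct_sub, dotProduct_neg, dotProduct_sum, dotProduct_smul, Complex.sub_re,
      Complex.neg_re, Complex.re_sum, smul_eq_mul]
    have e5 : (Complex.I * ((m + V x (ψ s x) : ℝ) : ℂ) * (star (ψ s x) ⬝ᵥ (β *ᵥ ψ s x))).re = 0 := by
      simp [mul_assoc, e4, -Complex.ofReal_add]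
    rw [e5, ← Finset.mul_sum]
    ring
  have hlam0 : 0 ≤ 1 / lam := by positivity
  have hw1 : ∀ s (x : Fin n → ℝ), |wt b lam s x| ≤ n := by
    intro s x
    refine (Finset.abs_sum_le_sum_abs _ _).trans ?_
    exact (Finset.sum_le_sum (g := fun _ => (1 : ℝ)) fun k _ => (Real.abs_tanh_lt_one _).le).trans
      (by simp)
  have hw2 : ∀ s (x : Fin n → ℝ), |Dt (wt b lam) s x| ≤ n * ((1 + b) / lam) := by
    intro s x
    rw [wt_Dt]
    refine (Finset.abs_sum_le_sum_abs _ _).trans ?_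
    refine (Finset.sum_le_sum (g := fun _ => (1 + b) / lam) fun k _ => ?_).trans (by simp)
    rw [abs_mul, abs_of_nonneg (sech_nonneg _), neg_div, abs_neg,
      abs_of_nonneg (by positivity : 0 ≤ (1 + b) / lam)]
    exact mul_le_of_le_one_left (by positivity) (sech_le _)
  have hw3 : ∀ k s (x : Fin n → ℝ), |Dx (wt b lam) k s x| ≤ 1 / lam := by
    intro k s x
    rw [wt_Dx, abs_of_nonneg (by positivity)]
    gcongr
    exact sech_le _
  have hC1 : (0 : ℝ) ≤ n := by positivity
  have hC2 : 0 ≤ n * ((1 + b) / lam) := by positivity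
  have main := hasDerivAt_weighted hρ hJ hcont hρ0 hJρ hrhoint (wt_C1 b lam)
    (C := n + n * ((1 + b) / lam) + 1 / lam) (by positivity)
    (fun s x => (hw1 s x).trans (by linarith)) (fun s x => (hw2 s x).trans (by linarith))
    (fun k s x => (hw3 k s x).trans (by linarith)) t
  refine ⟨_, by simpa only [hρe, wt] using main, ?_⟩
  have hS : ∀ j, Continuous (fun x : Fin n → ℝ =>
      (1 / Real.cosh ((x j - (1 + b) * t) / lam)) ^ 2) := by
    intro j
    refine (continuous_const.div (Real.continuous_cosh.comp ?_) fun x => cosh_ne _).pow 2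
    fun_prop
  have hJint : ∀ k s, Integrable (J k s) := fun k s =>
    (hrhoint s).mono' ((hJ k).cont s).aestronglyMeasurable (Filter.Eventually.of_forall (hJρ k s))
  have hSabs : ∀ j (x : Fin n → ℝ), |(1 / Real.cosh ((x j - (1 + b) * t) / lam)) ^ 2| ≤ 1 :=
    fun j x => by rw [abs_of_nonneg (sech_nonneg _)]; exact sech_le _
  have hSρ : ∀ j, Integrable (fun x : Fin n → ℝ =>
      (1 / Real.cosh ((x j - (1 + b) * t) / lam)) ^ 2 * ρ t x) := fun j =>
    integrable_bdd_mul (hrhoint t) (hS j) (hSabs j)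
  have hrhs : -(b / lam) * ∑ j : Fin n, ∫ (x : Fin n → ℝ),
      (1 / Real.cosh ((x j - (1 + b) * t) / lam)) ^ 2 * ρ t x
      = ∫ x : Fin n → ℝ, -(b / lam) * ∑ j : Fin n,
      (1 / Real.cosh ((x j - (1 + b) * t) / lam)) ^ 2 * ρ t x := by
    rw [integral_const_mul, integral_finsetSum _ fun j _ => hSρ j]
  simp only [← hρe]
  rw [hrhs]
  refine integral_mono ?_ ((integrable_finsetSum _ fun j _ => hSρ j).const_mul _) ?_
  · exact (integrable_bdd_mul (hrhoint t) ((wt_C1 b lam).dt_cont' t) (hw2 t)).add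
      (integrable_finsetSum _ fun k _ =>
        integrable_bdd_mul (hJint k t) ((wt_C1 b lam).dx_cont k t) (hw3 k t))
  · intro x
    simp only [wt_Dt, wt_Dx, Finset.sum_mul, Finset.mul_sum, ← Finset.sum_add_distrib]
    refine Finset.sum_le_sum fun k _ => ?_
    have h1 := (abs_le.1 (hJρ k t x)).2
    have h2 : 0 ≤ (1 / Real.cosh ((x k - (1 + b) * t) / lam)) ^ 2 / lam := by positivity
    have h3 := mul_le_mul_of_nonneg_left h1 h2
    set S := (1 / Real.cosh ((x k - (1 + b) * t) / lam)) ^ 2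
    have h4 : S * (-(1 + b) / lam) * ρ t x = -(b / lam) * (S * ρ t x) - S / lam * ρ t x := by ring
    linarith
end

section
/- Let m ∈ ℝ and let W₁, W₂ be polynomial functions of the four variables (a,b,c,d) = (ψ₁, ψ̄₁, ψ₂, ψ̄₂) satisfying the harmonicity conditions ∂_aW₂ + ∂_cW₁ = ∂_bW₂ − ∂_dW₁ = ∂_cW₂ − ∂_aW₁ = ∂_dW₂ + ∂_bW₁ = 0. Let (ψ₁, ψ₂) be a smooth solution of the 1D Dirac system i∂_tψ₁ = ∂_xψ₂ + mψ₁ − W₁, i∂_tψ₂ = −∂_xψ₁ − mψ₂ + W₂. Then ψ₁ and ψ₂ satisfy the second-order (nonlinear Klein–Gordon type) equations: ∂_t²ψ₁ = ∂_x²ψ₁ − m²ψ₁ + mW₁ + m(∂_aW₁)ψ₁ − (∂_aW₁)W₁ − m(∂_bW₁)ψ̄₁ + (∂_bW₁)W̄₁ − m(∂_cW₁)ψ₂ + (∂_cW₁)W₂ + m(∂_dW₁)ψ̄₂ − (∂_dW₁)W̄₂, and ∂_t²ψ₂ = ∂_x²ψ₂ − m²ψ₂ + mW₂ − m(∂_aW₂)ψ₁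 + (∂_aW₂)W₁ + m(∂_bW₂)ψ̄₁ − (∂_bW₂)W̄₁ + m(∂_cW₂)ψ₂ − (∂_cW₂)W₂ − m(∂_dW₂)ψ̄₂ + (∂_dW₂)W̄₂, where all derivatives ∂_aW_j, ∂_bW_j, ∂_cW_j, ∂_dW_j and the values W_j, W̄_j are evaluated at (a,b,c,d) = (ψ₁(t,x), ψ̄₁(t,x), ψ₂(t,x), ψ̄₂(t,x)). -/
/-- Chain rule for polynomial evaluation along a curve. -/
lemma evalW_hasDerivAt (W : MvPolynomial (Fin 4) ℂ) (f g : ℝ → ℂ) (f' g' : ℂ) (t : ℝ)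
    (hf : HasDerivAt f f' t) (hg : HasDerivAt g g' t) :
    HasDerivAt (fun s => evalW W (f s) (g s))
      (evalW (MvPolynomial.pderiv (0 : Fin 4) W) (f t) (g t) * f'
        + evalW (MvPolynomial.pderiv (1 : Fin 4) W) (f t) (g t) * (starRingEnd ℂ) f'
        + evalW (MvPolynomial.pderiv (2 : Fin 4) W) (f t) (g t) * g'
        + evalW (MvPolynomial.pderiv (3 : Fin 4) W) (f t) (g t) * (starRingEnd ℂ) g') t := by
  have hfc : HasDerivAt (fun s => (starRingEnd ℂ) (f s)) ((starRingEnd ℂ) f') t := hf.star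
  have hgc : HasDerivAt (fun s => (starRingEnd ℂ) (g s)) ((starRingEnd ℂ) g') t := hg.star
  unfold evalW
  induction W using MvPolynomial.induction_on with
  | C a => simpa using hasDerivAt_const t a
  | add p q hp hq =>
    simp only [map_add]
    refine (hp.add hq).congr_deriv ?_
    ring
  | mul_X p n hp =>
    simp only [map_mul, MvPolynomial.eval_X, Derivation.leibniz, map_add, smul_eq_mul,
      MvPolynomial.pderiv_X]
    fin_cases n
    · refine (hp.mul hf).congr_deriv ?_
      simp [Pi.single_apply]
      ring
    · refine (hp.mul hfc).congr_deriv ?_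
      simp [Pi.single_apply]
      ring
    · refine (hp.mul hg).congr_deriv ?_
      simp [Pi.single_apply]
      ring
    · refine (hp.mul hgc).congr_deriv ?_
      simp [Pi.single_apply]
      ring

lemma slice_t (F : ℝ × ℝ → ℂ) (hF : Differentiable ℝ F) (t x : ℝ) :
    HasDerivAt (fun s => F (s, x)) (fderiv ℝ F (t, x) (1, 0)) t :=
  (hF (t, x)).hasFDerivAt.comp_hasDerivAt t
    ((hasDerivAt_id t).prodMk (hasDerivAt_const t x))

lemma slice_x (F : ℝ × ℝ → ℂ) (hF : Differentiable ℝ F) (t x : ℝ) :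
    HasDerivAt (fun y => F (t, y)) (fderiv ℝ F (t, x) (0, 1)) x :=
  (hF (t, x)).hasFDerivAt.comp_hasDerivAt x
    ((hasDerivAt_const x t).prodMk (hasDerivAt_id x))

/-- The facts about partial derivatives of a smooth function of two variables. -/
lemma partials_s19 (ψ : ℝ → ℝ → ℂ)
    (hψ : ContDiff ℝ (⊤ : ℕ∞) (fun p : ℝ × ℝ => ψ p.1 p.2)) (t x : ℝ) :
    HasDerivAt (fun s => ψ s x) (deriv (fun s => ψ s x) t) t ∧
    HasDerivAt (fun y => ψ t y) (deriv (fun y => ψ t y) x) x ∧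
    HasDerivAt (fun s => deriv (fun s' => ψ s' x) s)
      (deriv (fun s => deriv (fun s' => ψ s' x) s) t) t ∧
    HasDerivAt (fun y => deriv (fun y' => ψ t y') y)
      (deriv (fun y => deriv (fun y' => ψ t y') y) x) x ∧
    ∃ M : ℂ, HasDerivAt (fun s => deriv (fun y => ψ s y) x) M t ∧
      HasDerivAt (fun y => deriv (fun s => ψ s y) t) M x := by
  set F : ℝ × ℝ → ℂ := fun p => ψ p.1 p.2 with hFdef
  have hd : Differentiable ℝ F := hψ.differentiable (by simp)
  have hT : ∀ t x, HasDerivAt (fun s => ψ s x) (fderiv ℝ F (t, x) (1, 0)) t := slice_t F hd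
  have hX : ∀ t x, HasDerivAt (fun y => ψ t y) (fderiv ℝ F (t, x) (0, 1)) x := slice_x F hd
  have hT' : ∀ t x, deriv (fun s => ψ s x) t = fderiv ℝ F (t, x) (1, 0) :=
    fun t x => (hT t x).deriv
  have hX' : ∀ t x, deriv (fun y => ψ t y) x = fderiv ℝ F (t, x) (0, 1) :=
    fun t x => (hX t x).deriv
  have hdd : Differentiable ℝ (fderiv ℝ F) :=
    (hψ.fderiv_right (m := 1) (by norm_cast)).differentiable (by simp)
  have hv : ∀ v : ℝ × ℝ, Differentiable ℝ (fun p => fderiv ℝ F p v) := fun v => by fun_prop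
  have hvd : ∀ (v w : ℝ × ℝ) p,
      fderiv ℝ (fun p => fderiv ℝ F p v) p w = fderiv ℝ (fderiv ℝ F) p w v := by
    intro v w p
    rw [fderiv_clm_apply (hdd p) (by fun_prop)]
    simp
  have hsymm : fderiv ℝ (fderiv ℝ F) (t, x) (1, 0) (0, 1)
      = fderiv ℝ (fderiv ℝ F) (t, x) (0, 1) (1, 0) :=
    (hψ.contDiffAt.isSymmSndFDerivAt (by simp; norm_cast)) _ _
  refine ⟨?_, ?_, ?_, ?_, fderiv ℝ (fderiv ℝ F) (t, x) (1, 0) (0, 1), ?_, ?_⟩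
  · exact (hT t x).differentiableAt.hasDerivAt
  · exact (hX t x).differentiableAt.hasDerivAt
  · simp only [hT']
    exact (slice_t _ (hv (1, 0)) t x).differentiableAt.hasDerivAt
  · simp only [hX']
    exact (slice_x _ (hv (0, 1)) t x).differentiableAt.hasDerivAt
  · simp only [hX']
    rw [← hvd]
    exact slice_t _ (hv (0, 1)) t x
  · simp only [hT']
    rw [hsymm, ← hvd]
    exact slice_x _ (hv (1, 0)) t x

/-- The second-order (nonlinear Klein–Gordon) equations satisfied by solutions of the
massive 1D Dirac system with harmonic nonlinearity (from the proof of Lemma 6.1 /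
Lemma B.1). -/
theorem dirac_to_klein_gordon
    (m : ℝ)
    (W₁ W₂ : MvPolynomial (Fin 4) ℂ)
    -- harmonicity (Cauchy–Riemann type) conditions
    (h1 : MvPolynomial.pderiv (0 : Fin 4) W₂ + MvPolynomial.pderiv (2 : Fin 4) W₁ = 0)
    (h2 : MvPolynomial.pderiv (1 : Fin 4) W₂ - MvPolynomial.pderiv (3 : Fin 4) W₁ = 0)
    (h3 : MvPolynomial.pderiv (2 : Fin 4) W₂ - MvPolynomial.pderiv (0 : Fin 4) W₁ = 0)
    (h4 : MvPolynomial.pderiv (3 : Fin 4) W₂ + MvPolynomial.pderiv (1 : Fin 4) W₁ = 0)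
    (ψ₁ ψ₂ : ℝ → ℝ → ℂ)
    (hψ₁ : ContDiff ℝ (⊤ : ℕ∞) (fun p : ℝ × ℝ => ψ₁ p.1 p.2))
    (hψ₂ : ContDiff ℝ (⊤ : ℕ∞) (fun p : ℝ × ℝ => ψ₂ p.1 p.2))
    -- the massive 1D Dirac system
    (heq1 : ∀ t x : ℝ,
      Complex.I * deriv (fun s => ψ₁ s x) t
        = deriv (fun y => ψ₂ t y) x + (m : ℂ) * ψ₁ t x - evalW W₁ (ψ₁ t x) (ψ₂ t x))
    (heq2 : ∀ t x : ℝ,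
      Complex.I * deriv (fun s => ψ₂ s x) t
        = -deriv (fun y => ψ₁ t y) x - (m : ℂ) * ψ₂ t x + evalW W₂ (ψ₁ t x) (ψ₂ t x)) :
    (∀ t x : ℝ,
      deriv (fun s => deriv (fun s' => ψ₁ s' x) s) t
        = deriv (fun y => deriv (fun y' => ψ₁ t y') y) x
          - (m : ℂ) ^ 2 * ψ₁ t x
          + (m : ℂ) * evalW W₁ (ψ₁ t x) (ψ₂ t x)
          + (m : ℂ) * evalW (MvPolynomial.pderiv (0 : Fin 4) W₁) (ψ₁ t x) (ψ₂ t x)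
              * ψ₁ t x
          - evalW (MvPolynomial.pderiv (0 : Fin 4) W₁) (ψ₁ t x) (ψ₂ t x)
              * evalW W₁ (ψ₁ t x) (ψ₂ t x)
          - (m : ℂ) * evalW (MvPolynomial.pderiv (1 : Fin 4) W₁) (ψ₁ t x) (ψ₂ t x)
              * (starRingEnd ℂ) (ψ₁ t x)
          + evalW (MvPolynomial.pderiv (1 : Fin 4) W₁) (ψ₁ t x) (ψ₂ t x)
              * (starRingEnd ℂ) (evalW W₁ (ψ₁ t x) (ψ₂ t x))
          - (m : ℂ) * evalW (MvPolynomial.pderiv (2 : Fin 4) W₁) (ψ₁ t x) (ψ₂ t x)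
              * ψ₂ t x
          + evalW (MvPolynomial.pderiv (2 : Fin 4) W₁) (ψ₁ t x) (ψ₂ t x)
              * evalW W₂ (ψ₁ t x) (ψ₂ t x)
          + (m : ℂ) * evalW (MvPolynomial.pderiv (3 : Fin 4) W₁) (ψ₁ t x) (ψ₂ t x)
              * (starRingEnd ℂ) (ψ₂ t x)
          - evalW (MvPolynomial.pderiv (3 : Fin 4) W₁) (ψ₁ t x) (ψ₂ t x)
              * (starRingEnd ℂ) (evalW W₂ (ψ₁ t x) (ψ₂ t x)))
    ∧
    (∀ t x : ℝ,
      deriv (fun s => deriv (fun s' => ψ₂ s' x) s) t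
        = deriv (fun y => deriv (fun y' => ψ₂ t y') y) x
          - (m : ℂ) ^ 2 * ψ₂ t x
          + (m : ℂ) * evalW W₂ (ψ₁ t x) (ψ₂ t x)
          - (m : ℂ) * evalW (MvPolynomial.pderiv (0 : Fin 4) W₂) (ψ₁ t x) (ψ₂ t x)
              * ψ₁ t x
          + evalW (MvPolynomial.pderiv (0 : Fin 4) W₂) (ψ₁ t x) (ψ₂ t x)
              * evalW W₁ (ψ₁ t x) (ψ₂ t x)
          + (m : ℂ) * evalW (MvPolynomial.pderiv (1 : Fin 4) W₂) (ψ₁ t x) (ψ₂ t x)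
              * (starRingEnd ℂ) (ψ₁ t x)
          - evalW (MvPolynomial.pderiv (1 : Fin 4) W₂) (ψ₁ t x) (ψ₂ t x)
              * (starRingEnd ℂ) (evalW W₁ (ψ₁ t x) (ψ₂ t x))
          + (m : ℂ) * evalW (MvPolynomial.pderiv (2 : Fin 4) W₂) (ψ₁ t x) (ψ₂ t x)
              * ψ₂ t x
          - evalW (MvPolynomial.pderiv (2 : Fin 4) W₂) (ψ₁ t x) (ψ₂ t x)
              * evalW W₂ (ψ₁ t x) (ψ₂ t x)
          - (m : ℂ) * evalW (MvPolynomial.pderiv (3 : Fin 4) W₂) (ψ₁ t x) (ψ₂ t x)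
              * (starRingEnd ℂ) (ψ₂ t x)
          + evalW (MvPolynomial.pderiv (3 : Fin 4) W₂) (ψ₁ t x) (ψ₂ t x)
              * (starRingEnd ℂ) (evalW W₂ (ψ₁ t x) (ψ₂ t x))) := by
  have ev : ∀ P Q : MvPolynomial (Fin 4) ℂ, ∀ z w, evalW (P + Q) z w = evalW P z w + evalW Q z w :=
    fun P Q z w => by simp [evalW]
  have es : ∀ P Q : MvPolynomial (Fin 4) ℂ, ∀ z w, evalW (P - Q) z w = evalW P z w - evalW Q z w :=
    fun P Q z w => by simp [evalW]
  have e0 : ∀ z w, evalW 0 z w = 0 := fun z w => by simp [evalW]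
  refine forall_and.mp fun t => forall_and.mp fun x => ?_
  have g1 := congrArg (fun P => evalW P (ψ₁ t x) (ψ₂ t x)) h1
  have g2 := congrArg (fun P => evalW P (ψ₁ t x) (ψ₂ t x)) h2
  have g3 := congrArg (fun P => evalW P (ψ₁ t x) (ψ₂ t x)) h3
  have g4 := congrArg (fun P => evalW P (ψ₁ t x) (ψ₂ t x)) h4
  simp only [ev, es, e0] at g1 g2 g3 g4
  obtain ⟨a1, b1, c1, d1, M1, m1, n1⟩ := partials_s19 ψ₁ hψ₁ t x
  obtain ⟨a2, b2, c2, d2, M2, m2, n2⟩ := partials_s19 ψ₂ hψ₂ t x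
  -- time and space derivatives of the two equations
  have T1 := (c1.const_mul Complex.I).unique
    ((((m2.add (a1.const_mul (m : ℂ))).sub (evalW_hasDerivAt W₁ _ _ _ _ t a1 a2))).congr_of_eventuallyEq
      (Filter.Eventually.of_forall fun s => heq1 s x))
  have X1 := (n1.const_mul Complex.I).unique
    ((((d2.add (b1.const_mul (m : ℂ))).sub (evalW_hasDerivAt W₁ _ _ _ _ x b1 b2))).congr_of_eventuallyEq
      (Filter.Eventually.of_forall fun y => heq1 t y))
  have T2 := (c2.const_mul Complex.I).unique
    ((((m1.neg.sub (a2.const_mul (m : ℂ))).add (evalW_hasDerivAt W₂ _ _ _ _ t a1 a2))).congr_of_eventuallyEq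
      (Filter.Eventually.of_forall fun s => heq2 s x))
  have X2 := (n2.const_mul Complex.I).unique
    ((((d1.neg.sub (b2.const_mul (m : ℂ))).add (evalW_hasDerivAt W₂ _ _ _ _ x b1 b2))).congr_of_eventuallyEq
      (Filter.Eventually.of_forall fun y => heq2 t y))
  have E1 := heq1 t x
  have E2 := heq2 t x
  have C1 := congrArg (starRingEnd ℂ) E1
  have C2 := congrArg (starRingEnd ℂ) E2
  simp only [map_mul, map_add, map_sub, map_neg, Complex.conj_I, Complex.conj_ofReal] at C1 C2
  clear a1 b1 c1 d1 m1 n1 a2 b2 c2 d2 m2 n2 heq1 heq2 h1 h2 h3 h4 hψ₁ hψ₂ ev es e0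
  have hI : Complex.I * Complex.I = -1 := Complex.I_mul_I
  generalize deriv (fun s => deriv (fun s' => ψ₁ s' x) s) t = tt1 at *
  generalize deriv (fun s => deriv (fun s' => ψ₂ s' x) s) t = tt2 at *
  generalize deriv (fun y => deriv (fun y' => ψ₁ t y') y) x = xx1 at *
  generalize deriv (fun y => deriv (fun y' => ψ₂ t y') y) x = xx2 at *
  generalize deriv (fun s => ψ₁ s x) t = t1 at *
  generalize deriv (fun s => ψ₂ s x) t = t2 at *
  generalize deriv (fun y => ψ₁ t y) x = x1 at *
  generalize deriv (fun y => ψ₂ t y) x = x2 at *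
  generalize (starRingEnd ℂ) t1 = t1c at *
  generalize (starRingEnd ℂ) t2 = t2c at *
  generalize (starRingEnd ℂ) x1 = x1c at *
  generalize (starRingEnd ℂ) x2 = x2c at *
  generalize (starRingEnd ℂ) (evalW W₁ (ψ₁ t x) (ψ₂ t x)) = w1c at *
  generalize (starRingEnd ℂ) (evalW W₂ (ψ₁ t x) (ψ₂ t x)) = w2c at *
  generalize (starRingEnd ℂ) (ψ₁ t x) = p1c at *
  generalize (starRingEnd ℂ) (ψ₂ t x) = p2c at *
  generalize evalW W₁ (ψ₁ t x) (ψ₂ t x) = w1 at *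
  generalize evalW W₂ (ψ₁ t x) (ψ₂ t x) = w2 at *
  generalize evalW (MvPolynomial.pderiv 0 W₁) (ψ₁ t x) (ψ₂ t x) = A1 at *
  generalize evalW (MvPolynomial.pderiv 1 W₁) (ψ₁ t x) (ψ₂ t x) = B1 at *
  generalize evalW (MvPolynomial.pderiv 2 W₁) (ψ₁ t x) (ψ₂ t x) = D1 at *
  generalize evalW (MvPolynomial.pderiv 3 W₁) (ψ₁ t x) (ψ₂ t x) = F1 at *
  generalize evalW (MvPolynomial.pderiv 0 W₂) (ψ₁ t x) (ψ₂ t x) = A2 at *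
  generalize evalW (MvPolynomial.pderiv 1 W₂) (ψ₁ t x) (ψ₂ t x) = B2 at *
  generalize evalW (MvPolynomial.pderiv 2 W₂) (ψ₁ t x) (ψ₂ t x) = D2 at *
  generalize evalW (MvPolynomial.pderiv 3 W₂) (ψ₁ t x) (ψ₂ t x) = F2 at *
  generalize ψ₁ t x = p1 at *
  generalize ψ₂ t x = p2 at *
  generalize Complex.I = J at *
  generalize (m : ℂ) = μ at *
  constructor
  · linear_combination tt1 * hI - J * T1 - X2 - μ * E1 + A1 * E1 - B1 * C1 + D1 * E2 - F1 * C2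
      - x1 * g1 - x1c * g2 - x2 * g3 - x2c * g4
  · linear_combination tt2 * hI - J * T2 + X1 + μ * E2 - A2 * E1 + B2 * C1 - D2 * E2 + F2 * C2
      - x2 * g1 + x2c * g2 + x1 * g3 - x1c * g4
end
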